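/- arXiv:2109.07845 — 6 statements merged into one kernel-verified Lean document; each statement's English description precedes it below -/
import Mathlib

section
/- Let K be a field with algebraic closure K̄, let n ≥ 3, and let A be a commutative K-algebra of dimension n as a K-vector space which admits exactly n pairwise distinct K-algebra homomorphisms σ_1, …, σ_n : A → K̄. Let α_1, …, α_{n−1} ∈ A and set v_ℓ := (σ_ℓ(α_1), …, σ_ℓ(α_{n−1})) ∈ K̄^{n−1} for 1 ≤ ℓ ≤ n. Then the following are equivalent: (1) every n−1 of the vectors v_1, …, v_n are linearly independent over K̄ (i.e. the corresponding points of projective space P^{n−2} are n points in general position); (2) there exists a unit λ ∈ A^× such that λα_1, …, λα_{n−1} is a K-basis of the trace-zero subspace {a ∈ A : Tr_{A/K}(a) = 0}. Moreover, if λ, λ' ∈ A^× both satisfy (2), then λ' = μλ for some μ ∈ K^×. -/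
/-!
Extending scalars identifies `L ⊗ A` with `L ^ n` through the `σ_ℓ`, so the trace is `∑ σ_ℓ` and
the trace form is nondegenerate. Let `W` be the span of the `α_i`. Since `(λ W)^⊥ = λ⁻¹ W^⊥` and the
trace-zero subspace is `1^⊥`, the family `λ α_i` is a basis of it exactly when `W^⊥ = K λ`; this
gives uniqueness of `λ` up to scalars.

General position says that a relation `∑ c_ℓ v_ℓ = 0` in which one `c_ℓ` vanishes is trivial. An
element `x ∈ W^⊥` yields the relation `c_ℓ = σ_ℓ(x)`, so in general position the line `W^⊥` is
spanned by a unit. Conversely, if `λ W` is the trace-zero subspace, a relation `c` yields a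
functional `∑ c_ℓ σ_ℓ(λ⁻¹) σ_ℓ` vanishing wherever `∑ σ_ℓ` does, so by independence of characters
the `c_ℓ σ_ℓ(λ⁻¹)` all agree, and `c = 0` as soon as one `c_ℓ` vanishes.
-/

open Module Submodule
open scoped TensorProduct

/-- A family of vectors such that deleting any one member leaves a linearly independent family; for
`n` vectors in an `(n - 1)`-dimensional space this is general position of the corresponding
projective points. -/
def InGeneralPosition (F : Type*) {V ι : Type*} [Semiring F] [AddCommMonoid V] [Module F V]
    (v : ι → V) : Prop :=
  ∀ i₀ : ι, LinearIndependent F fun i : {i : ι // i ≠ i₀} => v i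

/-- The family `β` is a `K`-basis of the trace-zero subspace of `A`. -/
def IsTraceZeroBasis (K : Type*) {A κ : Type*} [CommRing K] [CommRing A] [Algebra K A]
    (β : κ → A) : Prop :=
  LinearIndependent K β ∧ span K (Set.range β) = LinearMap.ker (Algebra.trace K A)

section LinearAlgebra

theorem inGeneralPosition_iff_relation_eq_zero {F V ι : Type*} [Ring F] [AddCommGroup V]
    [Module F V] [Fintype ι] {v : ι → V} :
    InGeneralPosition F v ↔
      ∀ c : ι → F, ∑ i, c i • v i = 0 → ∀ i₀, c i₀ = 0 → c = 0 := by
  classical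
  have sum_eq (c : ι → F) (i₀ : ι) (hc : c i₀ = 0) :
      ∑ i, c i • v i = ∑ i : {i // i ≠ i₀}, c i • v i := by
    rw [Fintype.sum_eq_add_sum_subtype_ne _ i₀, hc, zero_smul, zero_add]
  simp only [InGeneralPosition, Fintype.linearIndependent_iff]
  constructor
  · intro hv c hc i₀ hi₀
    funext i
    by_cases hi : i = i₀
    · rw [hi, hi₀, Pi.zero_apply]
    · exact hv i₀ (fun j => c j) (sum_eq c i₀ hi₀ ▸ hc) ⟨i, hi⟩
  · intro hv i₀ c hc i
    let c' : ι → F := fun j => if hj : j ≠ i₀ then c ⟨j, hj⟩ else 0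
    have hc' (j : {j // j ≠ i₀}) : c' j = c j := dif_pos j.2
    have hi₀ : c' i₀ = 0 := dif_neg (not_not.2 rfl)
    rw [← hc', hv c' (by simpa only [sum_eq c' i₀ hi₀, hc'] using hc) i₀ hi₀, Pi.zero_apply]

variable {F : Type*} [Field F]

theorem linearIndependent_swap_of_card_eq {ι κ : Type*} [Fintype ι] [Fintype κ]
    (hcard : Fintype.card ι = Fintype.card κ) {M : ι → κ → F} (hM : LinearIndependent F M) :
    LinearIndependent F fun k i => M i k := by
  rw [linearIndependent_iff_card_eq_finrank_span, ← hcard, ← hM.rank_matrix (M := M)]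
  exact Matrix.rank_eq_finrank_span_cols _

theorem orthogonal_injective {V : Type*} [AddCommGroup V] [Module F V] [FiniteDimensional F V]
    {B : LinearMap.BilinForm F V} (hB : B.Nondegenerate) (hrefl : B.IsRefl) :
    Function.Injective B.orthogonal :=
  Function.LeftInverse.injective (LinearMap.BilinForm.orthogonal_orthogonal hB hrefl)

end LinearAlgebra

section TraceForm

section CommRing

variable {K A : Type*} [CommRing K] [CommRing A] [Algebra K A]

theorem ker_trace_eq_orthogonal_span_one :
    LinearMap.ker (Algebra.trace K A) = (Algebra.traceForm K A).orthogonal (K ∙ (1 : A)) := by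
  ext a
  simp only [LinearMap.mem_ker, LinearMap.BilinForm.mem_orthogonal_iff, mem_span_singleton,
    forall_exists_index, forall_apply_eq_imp_iff, Algebra.traceForm_apply, smul_mul_assoc,
    one_mul, map_smul]
  exact ⟨fun ha c => by rw [ha, smul_zero], fun ha => by simpa only [one_smul] using ha 1⟩

theorem orthogonal_map_mulLeft (a : A) (W : Submodule K A) :
    (Algebra.traceForm K A).orthogonal (W.map (LinearMap.mulLeft K a)) =
      ((Algebra.traceForm K A).orthogonal W).comap (LinearMap.mulLeft K a) := by
  ext x
  simp [LinearMap.BilinForm.mem_orthogonal_iff, mul_assoc, mul_left_comm]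

end CommRing

variable {K A : Type*} [Field K] [CommRing A] [Algebra K A] [FiniteDimensional K A]

theorem orthogonal_ker_trace (hA : (Algebra.traceForm K A).Nondegenerate) :
    (Algebra.traceForm K A).orthogonal (LinearMap.ker (Algebra.trace K A)) = K ∙ (1 : A) := by
  rw [ker_trace_eq_orthogonal_span_one,
    LinearMap.BilinForm.orthogonal_orthogonal hA (Algebra.traceForm_isSymm K).isRefl]

theorem finrank_ker_trace_add_one [Nontrivial A] (hA : (Algebra.traceForm K A).Nondegenerate) :
    finrank K (LinearMap.ker (Algebra.trace K A)) + 1 = finrank K A := by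
  have h := LinearMap.BilinForm.finrank_orthogonal hA (K ∙ (1 : A))
  rw [← ker_trace_eq_orthogonal_span_one, finrank_span_singleton one_ne_zero] at h
  have := finrank_pos (R := K) (M := A)
  omega

variable {κ : Type*} {α : κ → A}

theorem span_range_units_mul_eq_ker_trace_iff (hA : (Algebra.traceForm K A).Nondegenerate)
    (lam : Aˣ) :
    span K (Set.range fun i => lam * α i) = LinearMap.ker (Algebra.trace K A) ↔
      (Algebra.traceForm K A).orthogonal (span K (Set.range α)) = K ∙ (lam : A) := by
  have hspan : span K (Set.range fun i => lam * α i) =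
      (span K (Set.range α)).map (LinearMap.mulLeft K (lam : A)) := by
    rw [Submodule.map_span, ← Set.range_comp]
    rfl
  have hbij : Function.Bijective (LinearMap.mulLeft K (lam : A)) := lam.mulLeft_bijective
  have hline : (K ∙ (1 : A)) = (K ∙ (lam : A)).comap (LinearMap.mulLeft K (lam : A)) := by
    rw [← comap_map_eq_of_injective hbij.injective (K ∙ (1 : A)), Submodule.map_span,
      Set.image_singleton, LinearMap.mulLeft_apply, mul_one]
  rw [← (orthogonal_injective hA (Algebra.traceForm_isSymm K).isRefl).eq_iff, hspan,
    orthogonal_map_mulLeft, orthogonal_ker_trace hA, hline]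
  exact (comap_injective_of_surjective hbij.surjective).eq_iff

theorem isTraceZeroBasis_units_mul_iff [Fintype κ] (hA : (Algebra.traceForm K A).Nondegenerate)
    (hcard : Fintype.card κ + 1 = finrank K A) (lam : Aˣ) :
    IsTraceZeroBasis K (fun i => lam * α i) ↔
      (Algebra.traceForm K A).orthogonal (span K (Set.range α)) = K ∙ (lam : A) := by
  have : Nontrivial A := nontrivial_of_finrank_pos (R := K) (by omega)
  rw [← span_range_units_mul_eq_ker_trace_iff hA]
  refine and_iff_right_of_imp fun hspan => ?_
  rw [linearIndependent_iff_card_eq_finrank_span, Set.finrank, hspan]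
  have := finrank_ker_trace_add_one hA
  omega

theorem IsTraceZeroBasis.exists_units_algebraMap_mul_eq [Fintype κ]
    (hA : (Algebra.traceForm K A).Nondegenerate) (hcard : Fintype.card κ + 1 = finrank K A)
    {lam lam' : Aˣ} (h : IsTraceZeroBasis K fun i => lam * α i)
    (h' : IsTraceZeroBasis K fun i => lam' * α i) :
    ∃ μ : Kˣ, (lam' : A) = algebraMap K A μ * lam := by
  rw [isTraceZeroBasis_units_mul_iff hA hcard] at h h'
  obtain ⟨μ, hμ⟩ := span_singleton_eq_span_singleton.1 (h.symm.trans h')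
  exact ⟨μ, by rw [← hμ, Units.smul_def, Algebra.smul_def]⟩

end TraceForm

section Embeddings

variable {K L A ι : Type*} [Field K] [Field L] [Algebra K L] [CommRing A] [Algebra K A]
  {σ : ι → A →ₐ[K] L}

theorem eq_zero_of_forall_sum_mul_algHom_eq_zero [Fintype ι] (hσ : Function.Injective σ) {c : ι → L}
    (hc : ∀ a, ∑ l, c l * σ l a = 0) : c = 0 := by
  have hindep := (linearIndependent_toLinearMap K A L).comp σ hσ
  exact funext (Fintype.linearIndependent_iff.1 hindep c (by ext a; simpa using hc a))

/-- The `L`-linear extension to `L ⊗[K] A` of the map `a ↦ (σ l a)_l`. -/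
noncomputable def baseChangeToPi (σ : ι → A →ₐ[K] L) : L ⊗[K] A →ₗ[L] ι → L :=
  LinearMap.liftBaseChange L (LinearMap.pi fun l => (σ l).toLinearMap)

theorem baseChangeToPi_tmul (x : L) (a : A) (l : ι) :
    baseChangeToPi σ (x ⊗ₜ a) l = x * σ l a := by
  simp [baseChangeToPi]

theorem baseChangeToPi_surjective [Finite ι] (hσ : Function.Injective σ) :
    Function.Surjective (baseChangeToPi σ) := by
  classical
  have := Fintype.ofFinite ι
  rw [← LinearMap.dualMap_injective_iff, injective_iff_map_eq_zero]
  intro f hf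
  have hf_apply (x : ι → L) : f x = ∑ l, f (Pi.single l 1) * x l := by
    conv_lhs => rw [← (Pi.basisFun L ι).sum_repr x]
    simp [mul_comm]
  have hcoeff : (fun l => f (Pi.single l 1)) = 0 := by
    refine eq_zero_of_forall_sum_mul_algHom_eq_zero hσ fun a => ?_
    have hfa : f (baseChangeToPi σ (1 ⊗ₜ a)) = 0 := LinearMap.congr_fun hf (1 ⊗ₜ a)
    rw [hf_apply] at hfa
    simpa only [baseChangeToPi_tmul, one_mul] using hfa
  ext l
  simpa using congrFun hcoeff l

variable [Fintype ι] [FiniteDimensional K A]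

theorem baseChangeToPi_bijective (hσ : Function.Injective σ)
    (hcard : Fintype.card ι = finrank K A) : Function.Bijective (baseChangeToPi σ) := by
  have hdim : finrank L (L ⊗[K] A) = finrank L (ι → L) := by
    rw [finrank_baseChange, finrank_fintype_fun_eq_card, hcard]
  have hsurj := baseChangeToPi_surjective hσ
  exact ⟨(LinearMap.injective_iff_surjective_of_finrank_eq_finrank hdim).2 hsurj, hsurj⟩

theorem eq_zero_of_forall_algHom_eq_zero (hσ : Function.Injective σ)
    (hcard : Fintype.card ι = finrank K A) {a : A} (ha : ∀ l, σ l a = 0) : a = 0 := by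
  have h : (1 : L) ⊗ₜ[K] a = 0 := by
    apply (baseChangeToPi_bijective hσ hcard).injective
    ext l
    simp [baseChangeToPi_tmul, ha]
  exact (FaithfullyFlat.one_tmul_eq_zero_iff K A a).1 h

theorem isUnit_of_forall_algHom_ne_zero (hσ : Function.Injective σ)
    (hcard : Fintype.card ι = finrank K A) {a : A} (ha : ∀ l, σ l a ≠ 0) : IsUnit a := by
  have : IsArtinianRing A := IsArtinianRing.of_finite K A
  refine IsArtinianRing.isUnit_of_mem_nonZeroDivisors (mem_nonZeroDivisors_iff_right.2 ?_)
  refine fun x hx => eq_zero_of_forall_algHom_eq_zero hσ hcard fun l => ?_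
  simpa [ha l] using congrArg (σ l) hx

theorem algebraMap_trace_eq_sum_algHom (hσ : Function.Injective σ)
    (hcard : Fintype.card ι = finrank K A) (a : A) :
    algebraMap K L (Algebra.trace K A a) = ∑ l, σ l a := by
  classical
  let e : L ⊗[K] A ≃ₗ[L] ι → L := .ofBijective _ (baseChangeToPi_bijective hσ hcard)
  have hdiag : e.conj ((Algebra.lmul K A a).baseChange L) =
      (Matrix.diagonal fun l => σ l a).toLin' := by
    rw [LinearEquiv.conj_apply, LinearEquiv.comp_toLinearMap_symm_eq]
    ext b l
    simp [e, baseChangeToPi_tmul, Matrix.mulVec_diagonal]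
  rw [Algebra.trace_apply, ← LinearMap.trace_baseChange, ← LinearMap.trace_conj' _ e, hdiag,
    Matrix.trace_toLin'_eq, Matrix.trace_diagonal]

theorem traceForm_nondegenerate_of_card_eq_finrank (hσ : Function.Injective σ)
    (hcard : Fintype.card ι = finrank K A) : (Algebra.traceForm K A).Nondegenerate := by
  have hrefl : LinearMap.IsRefl (Algebra.traceForm K A) := (Algebra.traceForm_isSymm K).isRefl
  refine hrefl.nondegenerate_iff_separatingLeft.2 ?_
  intro x hx
  have hx0 : (fun l => σ l x) = 0 := by
    refine eq_zero_of_forall_sum_mul_algHom_eq_zero hσ fun y => ?_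
    have hxy : Algebra.trace K A (x * y) = 0 := hx y
    simp only [← map_mul, ← algebraMap_trace_eq_sum_algHom hσ hcard, hxy, map_zero]
  exact eq_zero_of_forall_algHom_eq_zero hσ hcard (congrFun hx0)

theorem exists_trace_ne_zero [Nonempty ι] (hσ : Function.Injective σ)
    (hcard : Fintype.card ι = finrank K A) : ∃ a : A, Algebra.trace K A a ≠ 0 := by
  by_contra! htrace
  have hone : (fun _ : ι => (1 : L)) = 0 := by
    refine eq_zero_of_forall_sum_mul_algHom_eq_zero hσ fun a => ?_
    simp only [one_mul, ← algebraMap_trace_eq_sum_algHom hσ hcard, htrace, map_zero]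
  exact one_ne_zero (congrFun hone (Classical.arbitrary ι))

theorem eq_of_sum_mul_algHom_vanishes_on_ker_trace (hσ : Function.Injective σ)
    (hcard : Fintype.card ι = finrank K A) {d : ι → L}
    (hd : ∀ a ∈ LinearMap.ker (Algebra.trace K A), ∑ l, d l * σ l a = 0) (l m : ι) :
    d l = d m := by
  have : Nonempty ι := ⟨l⟩
  obtain ⟨b, hb⟩ := exists_trace_ne_zero hσ hcard
  have hcoeff : (fun k => d k * algebraMap K L (Algebra.trace K A b) - ∑ j, d j * σ j b) = 0 := by
    refine eq_zero_of_forall_sum_mul_algHom_eq_zero hσ fun a => ?_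
    have hker := hd (Algebra.trace K A b • a - Algebra.trace K A a • b)
      (by simp [mul_comm])
    simp only [map_sub, Algebra.smul_def, map_mul, AlgHom.commutes, mul_sub,
      Finset.sum_sub_distrib] at hker
    simp only [sub_mul, Finset.sum_sub_distrib, ← Finset.mul_sum]
    rw [← algebraMap_trace_eq_sum_algHom hσ hcard a, ← hker, Finset.sum_mul]
    congr! 2 <;> ring
  have heq (k : ι) := sub_eq_zero.1 (congrFun hcoeff k)
  exact mul_right_cancel₀ (by simpa using hb) ((heq l).trans (heq m).symm)

end Embeddings

section GeneralPosition

variable {K L A ι κ : Type*} [Field K] [Field L] [Algebra K L] [CommRing A] [Algebra K A]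
  [Fintype ι] {σ : ι → A →ₐ[K] L} {α : κ → A}

theorem InGeneralPosition.linearIndependent_of_card_eq [Fintype κ] [Nonempty ι]
    (hκ : Fintype.card κ + 1 = Fintype.card ι)
    (h : InGeneralPosition L fun l i => σ l (α i)) : LinearIndependent K α := by
  classical
  let l₀ := Classical.arbitrary ι
  have hcard : Fintype.card {l // l ≠ l₀} = Fintype.card κ := by
    rw [Fintype.card_subtype_compl, Fintype.card_subtype_eq]
    omega
  have hcols : LinearIndependent K fun i (l : {l // l ≠ l₀}) => σ l (α i) :=
    (linearIndependent_swap_of_card_eq hcard (h l₀)).restrict_scalars' K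
  exact hcols.of_comp (LinearMap.pi fun l : {l // l ≠ l₀} => (σ l).toLinearMap)

variable [FiniteDimensional K A]

theorem sum_smul_eq_zero_of_mem_orthogonal (hσ : Function.Injective σ)
    (hcard : Fintype.card ι = finrank K A) {x : A}
    (hx : x ∈ (Algebra.traceForm K A).orthogonal (span K (Set.range α))) :
    ∑ l, σ l x • (fun i => σ l (α i)) = 0 := by
  ext i
  have hxi : Algebra.trace K A (α i * x) = 0 := hx _ (subset_span ⟨i, rfl⟩)
  have hsum := algebraMap_trace_eq_sum_algHom hσ hcard (α i * x)
  rw [hxi, map_zero] at hsum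
  simpa [mul_comm] using hsum.symm

theorem InGeneralPosition.isUnit_of_mem_orthogonal (hσ : Function.Injective σ)
    (hcard : Fintype.card ι = finrank K A)
    (h : InGeneralPosition L fun l i => σ l (α i)) {x : A} (hx0 : x ≠ 0)
    (hx : x ∈ (Algebra.traceForm K A).orthogonal (span K (Set.range α))) : IsUnit x := by
  refine isUnit_of_forall_algHom_ne_zero hσ hcard fun l₀ hl₀ => hx0 ?_
  have hrel := sum_smul_eq_zero_of_mem_orthogonal hσ hcard hx
  exact eq_zero_of_forall_algHom_eq_zero hσ hcard
    (congrFun (inGeneralPosition_iff_relation_eq_zero.1 h _ hrel l₀ hl₀))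

theorem InGeneralPosition.exists_orthogonal_eq_span_unit [Fintype κ] (hσ : Function.Injective σ)
    (hcard : Fintype.card ι = finrank K A) (hκ : Fintype.card κ + 1 = Fintype.card ι)
    (h : InGeneralPosition L fun l i => σ l (α i)) :
    ∃ lam : Aˣ, (Algebra.traceForm K A).orthogonal (span K (Set.range α)) = K ∙ (lam : A) := by
  have : Nonempty ι := Fintype.card_pos_iff.1 (by omega)
  have hA := traceForm_nondegenerate_of_card_eq_finrank hσ hcard
  have hdim : finrank K ((Algebra.traceForm K A).orthogonal (span K (Set.range α))) = 1 := by
    rw [LinearMap.BilinForm.finrank_orthogonal hA,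
      finrank_span_eq_card (h.linearIndependent_of_card_eq hκ)]
    omega
  obtain ⟨x, hspan⟩ := (finrank_le_one_iff_isPrincipal _).1 hdim.le
  have hx0 : x ≠ 0 := by
    rintro rfl
    rw [hspan, span_singleton_eq_bot.2 rfl, finrank_bot] at hdim
    exact zero_ne_one hdim
  obtain ⟨lam, rfl⟩ := h.isUnit_of_mem_orthogonal hσ hcard hx0
    (hspan ▸ mem_span_singleton_self x)
  exact ⟨lam, hspan⟩

theorem inGeneralPosition_of_span_range_units_mul_eq_ker_trace (hσ : Function.Injective σ)
    (hcard : Fintype.card ι = finrank K A) {lam : Aˣ}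
    (hspan : span K (Set.range fun i => lam * α i) = LinearMap.ker (Algebra.trace K A)) :
    InGeneralPosition L fun l i => σ l (α i) := by
  rw [inGeneralPosition_iff_relation_eq_zero]
  intro c hc l₀ hl₀
  let d : ι → L := fun l => c l * σ l (lam⁻¹ : Aˣ)
  let φ : A →ₗ[K] L := ∑ l, d l • (σ l).toLinearMap
  have hφ : LinearMap.ker (Algebra.trace K A) ≤ LinearMap.ker φ := by
    rw [← hspan, span_le]
    rintro _ ⟨i, rfl⟩
    have hd (l : ι) : d l * σ l (lam * α i) = c l * σ l (α i) := by
      rw [mul_assoc, ← map_mul, Units.inv_mul_cancel_left]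
    simpa [φ, hd, -map_mul] using congrFun hc i
  have hconst := eq_of_sum_mul_algHom_vanishes_on_ker_trace hσ hcard (d := d) fun a ha => by
    simpa [φ] using hφ ha
  funext l
  have hdl : c l * σ l (lam⁻¹ : Aˣ) = 0 := (hconst l l₀).trans (by simp [d, hl₀])
  exact (mul_eq_zero.1 hdl).resolve_right (lam⁻¹.isUnit.map (σ l)).ne_zero

end GeneralPosition

theorem stmt2_general {K L A ι κ : Type*} [Field K] [Field L] [Algebra K L] [CommRing A]
    [Algebra K A] [FiniteDimensional K A] [Fintype ι] [Fintype κ]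
    (hcard : Fintype.card ι = finrank K A) (hκ : Fintype.card κ + 1 = Fintype.card ι)
    (σ : ι → A →ₐ[K] L) (hσ : Function.Injective σ) (α : κ → A) :
    (InGeneralPosition L (fun l i => σ l (α i)) ↔
        ∃ lam : Aˣ, IsTraceZeroBasis K fun i => lam * α i) ∧
      ∀ lam lam' : Aˣ, IsTraceZeroBasis K (fun i => lam * α i) →
        IsTraceZeroBasis K (fun i => lam' * α i) →
        ∃ μ : Kˣ, (lam' : A) = algebraMap K A μ * lam := by
  have hA := traceForm_nondegenerate_of_card_eq_finrank hσ hcard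
  have hκA := hκ.trans hcard
  refine ⟨⟨fun h => ?_, fun ⟨lam, hlam⟩ => ?_⟩, fun lam lam' h h' => ?_⟩
  · obtain ⟨lam, hlam⟩ := h.exists_orthogonal_eq_span_unit hσ hcard hκ
    exact ⟨lam, (isTraceZeroBasis_units_mul_iff hA hκA lam).2 hlam⟩
  · exact inGeneralPosition_of_span_range_units_mul_eq_ker_trace hσ hcard hlam.2
  · exact h.exists_units_algebraMap_mul_eq hA hκA h'

/-- For an `n`-dimensional commutative `K`-algebra `A` with exactly `n` distinct
`K`-algebra homomorphisms `σ_ℓ : A → K̄`, and `α_1, …, α_{n−1} ∈ A`, the vectors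
`v_ℓ = (σ_ℓ(α_1), …, σ_ℓ(α_{n−1}))` have every `n−1` of them linearly independent over `K̄`
iff there is a unit `λ ∈ A^×` with `λα_1, …, λα_{n−1}` a `K`-basis of the trace-zero subspace;
moreover such `λ` is unique up to `K^×`. -/
theorem stmt2 (K : Type*) [Field K] (n : ℕ) (hn : 3 ≤ n)
    (A : Type*) [CommRing A] [Algebra K A] [FiniteDimensional K A]
    (hdim : Module.finrank K A = n)
    (σ : Fin n → (A →ₐ[K] AlgebraicClosure K))
    (hσinj : Function.Injective σ)
    (hσall : ∀ f : A →ₐ[K] AlgebraicClosure K, ∃ ℓ, f = σ ℓ)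
    (α : Fin (n - 1) → A) :
    ((∀ ℓ₀ : Fin n,
        LinearIndependent (AlgebraicClosure K)
          (fun ℓ : {ℓ : Fin n // ℓ ≠ ℓ₀} => fun i : Fin (n - 1) => σ ℓ.1 (α i)))
      ↔ (∃ lam : Aˣ,
          LinearIndependent K (fun i : Fin (n - 1) => (lam : A) * α i)
            ∧ Submodule.span K (Set.range (fun i : Fin (n - 1) => (lam : A) * α i))
                = LinearMap.ker (Algebra.trace K A)))
    ∧ (∀ lam lam' : Aˣ,
        (LinearIndependent K (fun i : Fin (n - 1) => (lam : A) * α i)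
          ∧ Submodule.span K (Set.range (fun i : Fin (n - 1) => (lam : A) * α i))
              = LinearMap.ker (Algebra.trace K A)) →
        (LinearIndependent K (fun i : Fin (n - 1) => (lam' : A) * α i)
          ∧ Submodule.span K (Set.range (fun i : Fin (n - 1) => (lam' : A) * α i))
              = LinearMap.ker (Algebra.trace K A)) →
        ∃ μ : Kˣ, (lam' : A) = algebraMap K A (μ : K) * (lam : A)) :=
  stmt2_general (by simp [hdim]) (by simp only [Fintype.card_fin]; omega) σ hσinj α
end

section
/- Let K be an infinite field, let n ≥ 4, and let R = K[x_1,…,x_{n−1}]. Let I ⊆ R be the ideal generated by the quadratic forms x_i·(x_j − x_k) for all pairwise distinct i, j, k ∈ {1,…,n−1}. Then for f ∈ R we have f ∈ I if and only if f vanishes on the affine cone over the standard n points, i.e. f(t·e_ℓ) = 0 for all t ∈ K and 1 ≤ ℓ ≤ n−1, and f(t, t, …, t) = 0 for all t ∈ K, where e_ℓ ∈ K^{n−1} is the ℓ-th standard basis vector. -/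
open MvPolynomial
open scoped Polynomial

/-!
Let `I` be the ideal of the quadrics and fix `a ≠ b`. Modulo `I` all products `xᵢxⱼ` with `i ≠ j`
agree, so `I + (xₐx_b)` contains them all, hence contains every `f` vanishing on the coordinate
axes: such an `f` has no monomial in a single variable. Write `f = q + h·xₐx_b` with `q ∈ I`.
Restricting to the diagonal gives `h(t,…,t)·t² = 0`, so `h(t,…,t) = 0` and `h` lies in the ideal
of the differences `xⱼ - xₐ`. Finally `(xⱼ - xₐ)xₐx_b ∈ I`: choosing `k ≠ a, j`, both `xⱼ·xₐx_b`
and `xₐ·xₐx_b` are congruent to `xₐxⱼxₖ`. Hence `h·xₐx_b ∈ I` and `f ∈ I`.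
-/

section CommRing

variable {σ R : Type*} [CommRing R]

variable (σ R) in
/-- The ideal generated by the quadrics `xᵢ(xⱼ - xₖ)` with `i, j, k` pairwise distinct; for any
index type `σ`, finite or not. -/
noncomputable def quadricIdeal : Ideal (MvPolynomial σ R) :=
  Ideal.span {p | ∃ i j k : σ, i ≠ j ∧ j ≠ k ∧ i ≠ k ∧ p = X i * (X j - X k)}

/-- Restriction of a polynomial to the `ℓ`-th coordinate axis, as a polynomial in the parameter of
that line. -/
noncomputable def restrictAxis [DecidableEq σ] (ℓ : σ) : MvPolynomial σ R →ₐ[R] R[X] :=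
  aeval (Pi.single ℓ Polynomial.X)

variable (σ R) in
/-- Restriction of a polynomial to the diagonal line spanned by `(1, …, 1)`, as a polynomial in the
parameter of that line. -/
noncomputable def restrictDiagonal : MvPolynomial σ R →ₐ[R] R[X] :=
  aeval fun _ ↦ Polynomial.X

theorem coeff_restrictAxis [DecidableEq σ] (ℓ : σ) (f : MvPolynomial σ R) (d : ℕ) :
    (restrictAxis ℓ f).coeff d = f.coeff (Finsupp.single ℓ d) := by
  induction f using MvPolynomial.induction_on' with
  | add p q hp hq => rw [map_add, Polynomial.coeff_add, coeff_add, hp, hq]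
  | monomial s c =>
    rw [restrictAxis, aeval_monomial, coeff_monomial]
    by_cases hs : s.support ⊆ {ℓ}
    · obtain ⟨e, rfl⟩ := Finsupp.support_subset_singleton'.1 hs
      simp [Polynomial.coeff_X_pow, (Finsupp.single_injective ℓ).eq_iff, eq_comm]
    · obtain ⟨i, hi, hiℓ⟩ := Finset.not_subset.1 hs
      rw [Finset.mem_singleton] at hiℓ
      have hprod : s.prod (fun j e ↦ (Pi.single ℓ Polynomial.X : σ → R[X]) j ^ e) = 0 :=
        Finset.prod_eq_zero hi (by simp [hiℓ, Finsupp.mem_support_iff.1 hi])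
      have hne : s ≠ Finsupp.single ℓ d := by
        rintro rfl
        exact hs Finsupp.support_single_subset
      rw [hprod, mul_zero, Polynomial.coeff_zero, if_neg hne]

theorem monomial_mem_of_X_mul_X_mem {J : Ideal (MvPolynomial σ R)}
    (hJ : ∀ i j, i ≠ j → X i * X j ∈ J) {s : σ →₀ ℕ} (hs : s.support.Nontrivial) (c : R) :
    monomial s c ∈ J := by
  classical
  obtain ⟨i, hi, j, hj, hij⟩ := hs
  have hle : Finsupp.single i 1 + Finsupp.single j 1 ≤ s := by
    intro m
    have hsi := Finsupp.mem_support_iff.1 hi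
    have hsj := Finsupp.mem_support_iff.1 hj
    simp only [Finsupp.add_apply, Finsupp.single_apply]
    grind
  have hdvd : X i * X j ∣ monomial s c := by
    rw [X, X, monomial_mul, monomial_dvd_monomial]
    exact ⟨Or.inr hle, by simp⟩
  exact J.mem_of_dvd hdvd (hJ i j hij)

theorem mem_of_X_mul_X_mem_of_restrictAxis_eq_zero [DecidableEq σ] [Nonempty σ]
    {J : Ideal (MvPolynomial σ R)} (hJ : ∀ i j, i ≠ j → X i * X j ∈ J) {f : MvPolynomial σ R}
    (hf : ∀ ℓ, restrictAxis ℓ f = 0) : f ∈ J := by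
  rw [f.as_sum]
  refine J.sum_mem fun s hs ↦ monomial_mem_of_X_mul_X_mem hJ ?_ _
  by_contra hsupp
  rw [← Finset.one_lt_card_iff_nontrivial, not_lt, Finsupp.card_support_le_one'] at hsupp
  obtain ⟨ℓ, d, rfl⟩ := hsupp
  rw [mem_support_iff, ← coeff_restrictAxis, hf] at hs
  exact hs (Polynomial.coeff_zero d)

theorem mem_of_X_sub_X_mem_of_restrictDiagonal_eq_zero {J : Ideal (MvPolynomial σ R)} {a : σ}
    (hJ : ∀ j, X j - X a ∈ J) {h : MvPolynomial σ R} (hh : restrictDiagonal σ R h = 0) :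
    h ∈ J := by
  have hfactor : Ideal.Quotient.mkₐ R J =
      (Polynomial.aeval (Ideal.Quotient.mkₐ R J (X a))).comp (restrictDiagonal σ R) := by
    ext j
    simpa [restrictDiagonal] using Ideal.Quotient.eq.2 (hJ j)
  rw [← Ideal.Quotient.eq_zero_iff_mem, ← Ideal.Quotient.mkₐ_eq_mk R, hfactor, AlgHom.comp_apply,
    hh, map_zero]

theorem X_mul_X_sub_X_mem_quadricIdeal {i j k : σ} (hij : i ≠ j) (hik : i ≠ k) :
    X i * (X j - X k) ∈ quadricIdeal σ R := by
  by_cases hjk : j = k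
  · simp [hjk]
  · exact Ideal.subset_span ⟨i, j, k, hij, hjk, hik, rfl⟩

theorem X_mul_X_sub_X_mul_X_mem_quadricIdeal {i j a b : σ} (hij : i ≠ j) (hab : a ≠ b) :
    X i * X j - X a * X b ∈ quadricIdeal σ R := by
  by_cases hia : i = a
  · subst hia
    simpa only [mul_sub] using X_mul_X_sub_X_mem_quadricIdeal hij hab
  · have hsplit : (X i * X j - X a * X b : MvPolynomial σ R) =
        X i * (X j - X a) + X a * (X i - X b) := by ring
    rw [hsplit]
    exact add_mem (X_mul_X_sub_X_mem_quadricIdeal hij hia)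
      (X_mul_X_sub_X_mem_quadricIdeal (Ne.symm hia) hab)

theorem X_sub_X_mul_mem_quadricIdeal (hσ : 3 ≤ Cardinal.mk σ) {a b : σ} (hab : a ≠ b) (j : σ) :
    (X j - X a) * (X a * X b) ∈ quadricIdeal σ R := by
  obtain ⟨k, hka, hkj⟩ := Cardinal.exists_ne_ne_of_three_le hσ a j
  have hsplit : ((X j - X a) * (X a * X b) : MvPolynomial σ R) =
      X j * (X a * X b - X a * X k) + X a * (X j * X k - X a * X b) := by ring
  rw [hsplit]
  exact add_mem
    (Ideal.mul_mem_left _ _ (X_mul_X_sub_X_mul_X_mem_quadricIdeal hab hka.symm))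
    (Ideal.mul_mem_left _ _ (X_mul_X_sub_X_mul_X_mem_quadricIdeal hkj.symm hab))

theorem X_mul_X_mem_span_sup_quadricIdeal {i j a b : σ} (hij : i ≠ j) (hab : a ≠ b) :
    X i * X j ∈ Ideal.span {X a * X b} ⊔ quadricIdeal σ R := by
  rw [Ideal.mem_span_singleton_sup]
  exact ⟨1, _, X_mul_X_sub_X_mul_X_mem_quadricIdeal hij hab, by ring⟩

theorem mul_X_mul_X_mem_quadricIdeal (hσ : 3 ≤ Cardinal.mk σ) {a b : σ} (hab : a ≠ b)
    {h : MvPolynomial σ R} (hh : restrictDiagonal σ R h = 0) :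
    h * (X a * X b) ∈ quadricIdeal σ R := by
  have hcolon : h ∈ (quadricIdeal σ R).colon {X a * X b} :=
    mem_of_X_sub_X_mem_of_restrictDiagonal_eq_zero (a := a)
      (fun j ↦ Submodule.mem_colon_singleton.2 (X_sub_X_mul_mem_quadricIdeal hσ hab j)) hh
  exact Submodule.mem_colon_singleton.1 hcolon

theorem aeval_eq_zero_of_mem_quadricIdeal {A : Type*} [CommRing A] [Algebra R A] {v : σ → A}
    (hv : ∀ i j k, i ≠ j → i ≠ k → v i * (v j - v k) = 0) {f : MvPolynomial σ R}
    (hf : f ∈ quadricIdeal σ R) : aeval v f = 0 := by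
  suffices hle : quadricIdeal σ R ≤ RingHom.ker (aeval v : MvPolynomial σ R →ₐ[R] A) from hle hf
  refine Ideal.span_le.2 ?_
  rintro _ ⟨i, j, k, hij, -, hik, rfl⟩
  simpa using hv i j k hij hik

theorem restrictAxis_eq_zero_of_mem_quadricIdeal [DecidableEq σ] (ℓ : σ) {f : MvPolynomial σ R}
    (hf : f ∈ quadricIdeal σ R) : restrictAxis ℓ f = 0 := by
  refine aeval_eq_zero_of_mem_quadricIdeal (fun i j k hij hik ↦ ?_) hf
  by_cases hi : i = ℓ
  · subst hi
    rw [Pi.single_eq_of_ne hij.symm, Pi.single_eq_of_ne hik.symm, sub_self, mul_zero]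
  · rw [Pi.single_eq_of_ne hi, zero_mul]

theorem restrictDiagonal_eq_zero_of_mem_quadricIdeal {f : MvPolynomial σ R}
    (hf : f ∈ quadricIdeal σ R) : restrictDiagonal σ R f = 0 :=
  aeval_eq_zero_of_mem_quadricIdeal (by simp) hf

theorem mem_quadricIdeal_of_restrict_eq_zero [DecidableEq σ] (hσ : 3 ≤ Cardinal.mk σ)
    {f : MvPolynomial σ R} (haxis : ∀ ℓ, restrictAxis ℓ f = 0)
    (hdiag : restrictDiagonal σ R f = 0) : f ∈ quadricIdeal σ R := by
  have : Nontrivial σ :=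
    Cardinal.one_lt_iff_nontrivial.1 (lt_of_lt_of_le (by norm_num) hσ)
  obtain ⟨a, b, hab⟩ := exists_pair_ne σ
  have hsup : f ∈ Ideal.span {X a * X b} ⊔ quadricIdeal σ R :=
    mem_of_X_mul_X_mem_of_restrictAxis_eq_zero
      (fun _ _ hij ↦ X_mul_X_mem_span_sup_quadricIdeal hij hab) haxis
  obtain ⟨h, q, hq, rfl⟩ := Ideal.mem_span_singleton_sup.1 hsup
  have hh : restrictDiagonal σ R h = 0 := by
    have hX (i : σ) : restrictDiagonal σ R (X i) = Polynomial.X := aeval_X _ i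
    rw [map_add, restrictDiagonal_eq_zero_of_mem_quadricIdeal hq, add_zero, map_mul, map_mul, hX,
      hX, ← pow_two] at hdiag
    exact (Polynomial.monic_X_pow 2).mul_left_eq_zero_iff.1 hdiag
  exact add_mem (mul_X_mul_X_mem_quadricIdeal hσ hab hh) hq

theorem mem_quadricIdeal_iff_restrict_eq_zero [DecidableEq σ] (hσ : 3 ≤ Cardinal.mk σ)
    {f : MvPolynomial σ R} :
    f ∈ quadricIdeal σ R ↔ (∀ ℓ, restrictAxis ℓ f = 0) ∧ restrictDiagonal σ R f = 0 :=
  ⟨fun hf ↦ ⟨fun ℓ ↦ restrictAxis_eq_zero_of_mem_quadricIdeal ℓ hf,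
    restrictDiagonal_eq_zero_of_mem_quadricIdeal hf⟩,
    fun hf ↦ mem_quadricIdeal_of_restrict_eq_zero hσ hf.1 hf.2⟩

end CommRing

section InfiniteDomain

variable {σ K : Type*} [CommRing K] [IsDomain K] [Infinite K]

theorem aeval_polynomial_eq_zero_iff_forall_eval (v : σ → K[X]) (f : MvPolynomial σ K) :
    aeval v f = 0 ↔ ∀ t, eval (fun i ↦ (v i).eval t) f = 0 := by
  have heval (t : K) : (aeval v f).eval t = eval (fun i ↦ (v i).eval t) f := by
    have hcomp : (Polynomial.aeval t).comp (aeval v) = aeval (R := K) fun i ↦ (v i).eval t := by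
      ext i
      simp
    simpa using DFunLike.congr_fun hcomp f
  simp only [← heval]
  exact ⟨fun h t ↦ by rw [h, Polynomial.eval_zero], fun h ↦ Polynomial.funext (by simpa using h)⟩

theorem restrictAxis_eq_zero_iff_forall_eval [DecidableEq σ] (ℓ : σ) (f : MvPolynomial σ K) :
    restrictAxis ℓ f = 0 ↔ ∀ t : K, eval (fun s ↦ if s = ℓ then t else 0) f = 0 := by
  rw [restrictAxis, aeval_polynomial_eq_zero_iff_forall_eval]
  simp only [Pi.single_apply, apply_ite, Polynomial.eval_X, Polynomial.eval_zero]

theorem restrictDiagonal_eq_zero_iff_forall_eval (f : MvPolynomial σ K) :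
    restrictDiagonal σ K f = 0 ↔ ∀ t : K, eval (fun _ ↦ t) f = 0 := by
  simp only [restrictDiagonal, aeval_polynomial_eq_zero_iff_forall_eval, Polynomial.eval_X]

theorem stmt5_general [DecidableEq σ] (hσ : 3 ≤ Cardinal.mk σ) (f : MvPolynomial σ K) :
    f ∈ quadricIdeal σ K ↔
      ((∀ (t : K) (ℓ : σ), eval (fun s ↦ if s = ℓ then t else 0) f = 0)
        ∧ ∀ t : K, eval (fun _ ↦ t) f = 0) := by
  rw [mem_quadricIdeal_iff_restrict_eq_zero hσ, restrictDiagonal_eq_zero_iff_forall_eval,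
    forall_comm]
  simp only [restrictAxis_eq_zero_iff_forall_eval]

end InfiniteDomain

/-- For `K` infinite and `n ≥ 4`, the ideal of `R = K[x_1,…,x_{n−1}]` generated by
the quadrics `xᵢ(xⱼ − x_k)` (for `i, j, k` pairwise distinct) consists exactly of the
polynomials vanishing on the affine cone over the standard `n` points: the lines `K·e_ℓ`
and the line `K·(1,…,1)`. -/
theorem stmt5 (K : Type*) [Field K] [Infinite K] (n : ℕ) (hn : 4 ≤ n)
    (I : Ideal (MvPolynomial (Fin (n - 1)) K))
    (hI : I = Ideal.span {p : MvPolynomial (Fin (n - 1)) K |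
      ∃ i j k : Fin (n - 1), i ≠ j ∧ j ≠ k ∧ i ≠ k ∧ p = X i * (X j - X k)})
    (f : MvPolynomial (Fin (n - 1)) K) :
    f ∈ I ↔
      ((∀ (t : K) (ℓ : Fin (n - 1)),
          eval (fun s : Fin (n - 1) => if s = ℓ then t else 0) f = 0)
        ∧ ∀ t : K, eval (fun _ : Fin (n - 1) => t) f = 0) := by
  subst hI
  exact stmt5_general (by rw [Cardinal.mk_fin]; exact_mod_cast Nat.le_sub_one_of_lt hn) f
end

section
/- With the bracket setup below, for every 2 ≤ r ≤ m−2 and all indices a_1, …, a_m ∈ {1,…,n−1} we have [a_1,…,a_{r−1},a_r,a_{r+1},a_{r+2},…,a_m] = −[a_1,…,a_{r−1},a_{r+1},a_r,a_{r+2},…,a_m]; that is, swapping two adjacent indices in positions r and r+1 (with 2 ≤ r ≤ m−2) changes the sign of the bracket. -/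
open MvPolynomial

/-- The row vector `(∂φ_1/∂x_{a_1})(∂φ_2/∂x_{a_2})⋯(∂φ_r/∂x_{a_r})` (0-based: the sequence
`a` and the matrices `φ` are indexed from 0). -/
noncomputable def brkVec {K : Type*} [Field K] {N : ℕ} {b : ℕ → ℕ}
    (φ : ∀ r : ℕ, Matrix (Fin (b r)) (Fin (b (r + 1))) (MvPolynomial (Fin N) K))
    (a : ℕ → Fin N) : ∀ r : ℕ, Fin (b r) → MvPolynomial (Fin N) K
  | 0 => fun _ => 1
  | (r + 1) => Matrix.vecMul (brkVec φ a r) (fun p q => pderiv (a r) (φ r p q))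

/-- The bracket `[a_1, …, a_m] = (∂φ_1/∂x_{a_1})⋯(∂φ_m/∂x_{a_m})`, a `1 × 1` matrix (since
`b m = 1`) identified with a polynomial via the sum of its entries. -/
noncomputable def brk {K : Type*} [Field K] {N : ℕ} {b : ℕ → ℕ}
    (φ : ∀ r : ℕ, Matrix (Fin (b r)) (Fin (b (r + 1))) (MvPolynomial (Fin N) K))
    (m : ℕ) (a : ℕ → Fin N) : MvPolynomial (Fin N) K :=
  ∑ j : Fin (b m), brkVec φ a m j

/-!
The matrices `A = φ_r` and `B = φ_{r+1}` have linear entries, so their second derivatives vanish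
and applying `∂_i ∂_j` to `A B = 0` leaves only the cross terms `∂_i A ∂_j B + ∂_j A ∂_i B = 0`.
Exchanging `i` and `j` thus negates the product of these two factors of the bracket, and the other
factors are unaffected.
-/

section Derivation

variable {R S l m n : Type*} [CommSemiring R] [Fintype m]

theorem matrix_map_derivation_mul [CommSemiring S] [Algebra R S] (D : Derivation R S S)
    (A : Matrix l m S) (B : Matrix m n S) :
    (A * B).map D = A.map D * B + A * B.map D := by
  ext i k
  simp only [Matrix.map_apply, Matrix.add_apply, Matrix.mul_apply, map_sum, Derivation.leibniz,
    smul_eq_mul, ← Finset.sum_add_distrib]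
  exact Finset.sum_congr rfl fun j _ => by ring

theorem matrix_map_derivation_mul_map_derivation_eq_neg [CommRing S] [Algebra R S]
    (D E : Derivation R S S) {A : Matrix l m S} {B : Matrix m n S} (hAB : A * B = 0)
    (hA : (A.map E).map D = 0) (hB : (B.map E).map D = 0) :
    A.map D * B.map E = -(A.map E * B.map D) := by
  have hDE : ((A * B).map E).map D = A.map E * B.map D + A.map D * B.map E := by
    rw [matrix_map_derivation_mul, Matrix.map_add D (map_add D), matrix_map_derivation_mul,
      matrix_map_derivation_mul, hA, hB, Matrix.zero_mul, Matrix.mul_zero, zero_add, add_zero]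
  have h_zero : ((A * B).map E).map D = 0 := by
    rw [hAB, Matrix.map_zero E (map_zero E), Matrix.map_zero D (map_zero D)]
  exact eq_neg_of_add_eq_zero_right (hDE.symm.trans h_zero)

end Derivation

section LinearEntries

variable {R σ l m n : Type*}

theorem pderiv_pderiv_eq_zero_of_isHomogeneous_one [CommSemiring R] {f : MvPolynomial σ R}
    (hf : f.IsHomogeneous 1) (i j : σ) : pderiv i (pderiv j f) = 0 := by
  have h_const : (pderiv j f).totalDegree = 0 := Nat.le_zero.mp hf.pderiv.totalDegree_le
  rw [totalDegree_eq_zero_iff_eq_C.mp h_const, pderiv_C]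

theorem matrix_map_pderiv_map_pderiv_eq_zero [CommSemiring R] {A : Matrix l m (MvPolynomial σ R)}
    (hA : ∀ p q, (A p q).IsHomogeneous 1) (i j : σ) : (A.map (pderiv j)).map (pderiv i) = 0 := by
  ext1 p q
  exact pderiv_pderiv_eq_zero_of_isHomogeneous_one (hA p q) i j

theorem matrix_map_pderiv_mul_map_pderiv_eq_neg [CommRing R] [Fintype m]
    {A : Matrix l m (MvPolynomial σ R)} {B : Matrix m n (MvPolynomial σ R)} (hAB : A * B = 0)
    (hA : ∀ p q, (A p q).IsHomogeneous 1) (hB : ∀ p q, (B p q).IsHomogeneous 1) (i j : σ) :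
    A.map (pderiv i) * B.map (pderiv j) = -(A.map (pderiv j) * B.map (pderiv i)) :=
  matrix_map_derivation_mul_map_derivation_eq_neg (R := R) (pderiv i) (pderiv j) hAB
    (matrix_map_pderiv_map_pderiv_eq_zero hA i j) (matrix_map_pderiv_map_pderiv_eq_zero hB i j)

end LinearEntries

section Bracket

variable {K : Type*} [Field K] {N : ℕ} {b : ℕ → ℕ}
  (φ : ∀ r : ℕ, Matrix (Fin (b r)) (Fin (b (r + 1))) (MvPolynomial (Fin N) K))

theorem brkVec_succ (a : ℕ → Fin N) (r : ℕ) :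
    brkVec φ a (r + 1) = Matrix.vecMul (brkVec φ a r) ((φ r).map (pderiv (a r))) :=
  rfl

theorem brkVec_add_two (a : ℕ → Fin N) (r : ℕ) :
    brkVec φ a (r + 2) = Matrix.vecMul (brkVec φ a r)
      ((φ r).map (pderiv (a r)) * (φ (r + 1)).map (pderiv (a (r + 1)))) := by
  rw [brkVec_succ, brkVec_succ, Matrix.vecMul_vecMul]

theorem brkVec_congr {a c : ℕ → Fin N} {r : ℕ} (hac : ∀ s < r, a s = c s) :
    brkVec φ a r = brkVec φ c r := by
  induction r with
  | zero => rfl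
  | succ r ih =>
    rw [brkVec_succ, brkVec_succ, ih fun s hs => hac s (hs.trans r.lt_succ_self),
      hac r r.lt_succ_self]

theorem brkVec_eq_neg_of_le {a c : ℕ → Fin N} {r s : ℕ} (hrs : r ≤ s)
    (hr : brkVec φ a r = -brkVec φ c r) (hac : ∀ t, r ≤ t → a t = c t) :
    brkVec φ a s = -brkVec φ c s := by
  induction s, hrs using Nat.le_induction with
  | base => exact hr
  | succ t hrt ih => rw [brkVec_succ, brkVec_succ, ih, hac t hrt, Matrix.neg_vecMul]

variable {φ} {p : ℕ}

theorem brkVec_comp_swap_add_two (hcomp : φ p * φ (p + 1) = 0)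
    (hlin : ∀ i j, (φ p i j).IsHomogeneous 1) (hlin' : ∀ i j, (φ (p + 1) i j).IsHomogeneous 1)
    (a : ℕ → Fin N) :
    brkVec φ (a ∘ Equiv.swap p (p + 1)) (p + 2) = -brkVec φ a (p + 2) := by
  have h_prefix : brkVec φ (a ∘ Equiv.swap p (p + 1)) p = brkVec φ a p :=
    brkVec_congr φ fun s hs => congrArg a <|
      Equiv.swap_apply_of_ne_of_ne hs.ne (hs.trans p.lt_succ_self).ne
  rw [brkVec_add_two, brkVec_add_two, h_prefix, Function.comp_apply, Function.comp_apply,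
    Equiv.swap_apply_left, Equiv.swap_apply_right,
    matrix_map_pderiv_mul_map_pderiv_eq_neg hcomp hlin hlin', Matrix.vecMul_neg]

theorem stmt6_general (hcomp : φ p * φ (p + 1) = 0)
    (hlin : ∀ i j, (φ p i j).IsHomogeneous 1) (hlin' : ∀ i j, (φ (p + 1) i j).IsHomogeneous 1)
    {m : ℕ} (hpm : p + 2 ≤ m) (a : ℕ → Fin N) :
    brk φ m (a ∘ Equiv.swap p (p + 1)) = -brk φ m a := by
  have h_vec : brkVec φ (a ∘ Equiv.swap p (p + 1)) m = -brkVec φ a m :=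
    brkVec_eq_neg_of_le φ hpm (brkVec_comp_swap_add_two hcomp hlin hlin' a) fun t ht =>
      congrArg a <| Equiv.swap_apply_of_ne_of_ne (by lia) (by lia)
  simp only [brk, h_vec, Pi.neg_apply, Finset.sum_neg_distrib]

end Bracket

/-- In the bracket setup (matrices `φ_1, …, φ_m` with `φ_r φ_{r+1} = 0`,
quadratic entries at the two ends and linear entries in the middle), swapping two adjacent
indices in (1-based) positions `r, r+1` with `2 ≤ r ≤ m−2` changes the sign of the bracket.
Here positions are 0-based: `p = r − 1`, so `1 ≤ p` and `p + 3 ≤ m`. -/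
theorem stmt6 (K : Type*) [Field K] (n : ℕ) (hn : 4 ≤ n) (m : ℕ) (hm : m = n - 2)
    (b : ℕ → ℕ) (hbpos : ∀ r, r ≤ m → 0 < b r) (hb0 : b 0 = 1) (hbm : b m = 1)
    (φ : ∀ r : ℕ, Matrix (Fin (b r)) (Fin (b (r + 1))) (MvPolynomial (Fin (n - 1)) K))
    (hcomp : ∀ r, r + 2 ≤ m → φ r * φ (r + 1) = 0)
    (hdeg1 : ∀ p q, (φ 0 p q).IsHomogeneous 2)
    (hdegm : ∀ p q, (φ (m - 1) p q).IsHomogeneous 2)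
    (hdegmid : ∀ r, 1 ≤ r → r + 2 ≤ m → ∀ p q, (φ r p q).IsHomogeneous 1)
    (a : ℕ → Fin (n - 1)) (p : ℕ) (hp1 : 1 ≤ p) (hp2 : p + 3 ≤ m) :
    brk φ m (fun s => if s = p then a (p + 1) else if s = p + 1 then a p else a s)
      = - brk φ m a := by
  simpa only [Function.comp_def, Equiv.swap_apply_def, apply_ite a] using
    stmt6_general (hcomp p (by lia)) (hdegmid p hp1 (by lia))
      (hdegmid (p + 1) (by lia) (by lia)) (by lia : p + 2 ≤ m) a
end

section
/- With the bracket setup below, assume self-duality: b_r = b_{m−r} for all 0 ≤ r ≤ m, and there exist invertible matrices U_0, …, U_m with entries in K, with U_0 = (1) the 1×1 identity and U_m = (c) a 1×1 scalar matrix, such that U_{r−1}·φ_r = φ_{m+1−r}^T·U_r for all 1 ≤ r ≤ m. Then for all indices a_1, …, a_m ∈ {1,…,n−1} we have [a_1, a_2, …, a_m] = c·[a_m, a_{m−1}, …, a_1]. (For the minimal free resolution of a set of n points in general position such matrices exist with c = +1 if m ≡ 0,1 (mod 4) and c = −1 if m ≡ 2,3 (mod 4), by Gorenstein duality.) -/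
open MvPolynomial Matrix

/-!
Self-duality says that the scalar matrices `U r` form a chain map from `φ` to its transpose. Scalar
matrices commute with partial derivatives, so `U` also intertwines the differentiated matrices
`D r = ∂φ_r/∂x_{a_r}` with the transposes of the matrices `E r` that belong to the reversed index
sequence: `U r * D r = (E (m - 1 - r))ᵀ * U (r + 1)`. Moving `U` across one factor at a
time gives `U 0 * D 0 ⋯ D (m - 1) = (E 0 ⋯ E (m - 1))ᵀ * U m`, and `U 0 = 1`, `U m = c`.
-/

section ChainProducts

variable {R : Type*} [CommSemiring R] {ι κ : ℕ → Type*} [∀ r, Fintype (ι r)] [∀ r, Fintype (κ r)]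

/-- The column sums of the product `M 0 * ⋯ * M (r - 1)`, as a row vector. If `ι 0` has one element,
this is the product itself; `brkVec` is the case `M r = ∂φ_r/∂x_{a_r}`. -/
def prodColSum (M : ∀ r, Matrix (ι r) (ι (r + 1)) R) : ∀ r, ι r → R
  | 0 => 1
  | r + 1 => prodColSum M r ᵥ* M r

/-- The row sums of the product `M r * ⋯ * M (r + l - 1)` of `l` factors, as a column vector; they
complement `prodColSum M r` to the sum of all entries of `M 0 * ⋯ * M (r + l - 1)`. Counting factors
keeps the index `r + l` out of the type. -/
def prodRowSum (M : ∀ r, Matrix (ι r) (ι (r + 1)) R) : ∀ r : ℕ, ℕ → ι r → R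
  | _, 0 => 1
  | r, l + 1 => M r *ᵥ prodRowSum M (r + 1) l

theorem prodColSum_dotProduct_prodRowSum (M : ∀ r, Matrix (ι r) (ι (r + 1)) R) {r l m : ℕ}
    (h : r + l = m) : prodColSum M r ⬝ᵥ prodRowSum M r l = ∑ j, prodColSum M m j := by
  induction l generalizing r with
  | zero =>
    obtain rfl : r = m := h
    exact dotProduct_one _
  | succ l ih =>
    rw [prodRowSum, dotProduct_mulVec]
    exact ih (r := r + 1) (by omega)

variable {D : ∀ r, Matrix (ι r) (ι (r + 1)) R} {E : ∀ r, Matrix (κ r) (κ (r + 1)) R} {m : ℕ}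
  {V : ∀ r l, r + l = m → Matrix (κ l) (ι r) R} {c : R}

theorem mulVec_prodRowSum_eq_smul_prodColSum
    (hV : ∀ r l (h : r + (l + 1) = m),
      V r (l + 1) h * D r = (E l)ᵀ * V (r + 1) l (by omega))
    (hVm : V m 0 rfl *ᵥ 1 = c • 1) {r l : ℕ} (h : r + l = m) :
    V r l h *ᵥ prodRowSum D r l = c • prodColSum E l := by
  induction l generalizing r with
  | zero =>
    obtain rfl : r = m := h
    exact hVm
  | succ l ih =>
    calc V r (l + 1) h *ᵥ prodRowSum D r (l + 1)
      _ = (E l)ᵀ *ᵥ (V (r + 1) l (by omega) *ᵥ prodRowSum D (r + 1) l) := by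
        rw [prodRowSum, mulVec_mulVec, hV, mulVec_mulVec]
      _ = (E l)ᵀ *ᵥ (c • prodColSum E l) := by rw [ih]
      _ = c • prodColSum E (l + 1) := by rw [mulVec_smul, mulVec_transpose, prodColSum]

theorem sum_prodColSum_eq_mul_sum_prodColSum
    (hV : ∀ r l (h : r + (l + 1) = m),
      V r (l + 1) h * D r = (E l)ᵀ * V (r + 1) l (by omega))
    (hV0 : 1 ᵥ* V 0 m (zero_add m) = 1) (hVm : V m 0 rfl *ᵥ 1 = c • 1) :
    ∑ j, prodColSum D m j = c * ∑ j, prodColSum E m j :=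
  calc ∑ j, prodColSum D m j
    _ = 1 ⬝ᵥ prodRowSum D 0 m := (prodColSum_dotProduct_prodRowSum D (zero_add m)).symm
    _ = 1 ⬝ᵥ (V 0 m (zero_add m) *ᵥ prodRowSum D 0 m) := by rw [dotProduct_mulVec, hV0]
    _ = 1 ⬝ᵥ (c • prodColSum E m) := by rw [mulVec_prodRowSum_eq_smul_prodColSum hV hVm]
    _ = c * ∑ j, prodColSum E m j := by rw [dotProduct_smul, one_dotProduct, smul_eq_mul]

end ChainProducts

section ScalarMatrices

variable {S A B l m n : Type*} [CommSemiring S] [Semiring A] [Algebra S A] [Semiring B]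
  [Algebra S B] [Fintype m] (f : A →ₗ[S] B)

theorem map_algebraMap_mul_map_linearMap (U : Matrix l m S) (P : Matrix m n A) :
    (U.map (algebraMap S A) * P).map f = U.map (algebraMap S B) * P.map f := by
  ext i j
  simp only [Matrix.map_apply, mul_apply, ← Algebra.smul_def, map_sum, map_smul]

theorem map_mul_algebraMap_map_linearMap (P : Matrix l m A) (U : Matrix m n S) :
    (P * U.map (algebraMap S A)).map f = P.map f * U.map (algebraMap S B) := by
  ext i j
  simp only [Matrix.map_apply, mul_apply, ← Algebra.commutes, ← Algebra.smul_def, map_sum,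
    map_smul]

end ScalarMatrices

theorem submatrix_mul_eq_mul_submatrix {R k l m n m' n' : Type*} [NonUnitalNonAssocSemiring R]
    [Fintype k] [Fintype n] [Fintype n'] (e : m' ≃ m) (f : n' ≃ n)
    {U : Matrix m k R} {P : Matrix k l R} {Q : Matrix m' n' R} {W : Matrix n l R}
    (h : U * P = Q.submatrix e.symm f.symm * W) :
    U.submatrix e id * P = Q * W.submatrix f id :=
  calc U.submatrix e id * P
    _ = (U * P).submatrix e id := (submatrix_mul U P e id id Function.bijective_id).symm
    _ = (Q.submatrix e.symm f.symm).submatrix e f * W.submatrix f id := by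
      rw [h, submatrix_mul_equiv]
    _ = Q * W.submatrix f id := by
      simp only [submatrix_submatrix, Equiv.symm_comp_self, submatrix_id_id]

theorem submatrix_mul_map_pderiv_eq {K σ k l m n m' n' : Type*} [CommSemiring K] [Fintype k]
    [Fintype n] [Fintype n'] (e : m' ≃ m) (f : n' ≃ n) {U : Matrix m k K} {W : Matrix n l K}
    {P : Matrix k l (MvPolynomial σ K)} {Q : Matrix n' m' (MvPolynomial σ K)}
    (h : U.map C * P = Qᵀ.submatrix e.symm f.symm * W.map C) (i : σ) :
    (U.map C).submatrix e id * P.map (pderiv i)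
      = (Q.map (pderiv i))ᵀ * (W.map C).submatrix f id := by
  apply submatrix_mul_eq_mul_submatrix
  calc U.map C * P.map (pderiv i)
    _ = (U.map C * P).map (pderiv i) :=
      (map_algebraMap_mul_map_linearMap (pderiv i).toLinearMap U P).symm
    _ = (Qᵀ.submatrix e.symm f.symm * W.map C).map (pderiv i) := by rw [h]
    _ = (Q.map (pderiv i))ᵀ.submatrix e.symm f.symm * W.map C :=
      map_mul_algebraMap_map_linearMap (pderiv i).toLinearMap _ W

theorem brk_eq_sum_prodColSum {K : Type*} [Field K] {N : ℕ} {b : ℕ → ℕ}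
    (φ : ∀ r : ℕ, Matrix (Fin (b r)) (Fin (b (r + 1))) (MvPolynomial (Fin N) K))
    (m : ℕ) (a : ℕ → Fin N) :
    brk φ m a = ∑ j, prodColSum (fun r => (φ r).map (pderiv (a r))) m j := by
  have brkVec_eq : ∀ r, brkVec φ a r = prodColSum (fun r => (φ r).map (pderiv (a r))) r := by
    intro r
    induction r with
    | zero => rfl
    | succ r ih => rw [brkVec, prodColSum, ih]; rfl
  rw [brk, brkVec_eq]

theorem stmt8_general {K : Type*} [Field K] {N m : ℕ} {b : ℕ → ℕ}
    (φ : ∀ r : ℕ, Matrix (Fin (b r)) (Fin (b (r + 1))) (MvPolynomial (Fin N) K))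
    (hbsym : ∀ r, r ≤ m → b r = b (m - r))
    (U : ∀ r : ℕ, Matrix (Fin (b r)) (Fin (b r)) K) (hU0 : U 0 = 1) (c : K)
    (hUm : U m = c • (1 : Matrix (Fin (b m)) (Fin (b m)) K))
    (hdual : ∀ s, s < m →
      ∀ (hrow : b (m - (s + 1) + 1) = b s) (hcol : b (m - (s + 1)) = b (s + 1)),
        (U s).map (fun x => (C x : MvPolynomial (Fin N) K)) * φ s
          = (Matrix.transpose (φ (m - (s + 1)))).submatrix (Fin.cast hrow.symm) (Fin.cast hcol.symm)
              * (U (s + 1)).map (fun x => (C x : MvPolynomial (Fin N) K)))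
    (a : ℕ → Fin N) :
    brk φ m a = C c * brk φ m (fun r => a (m - 1 - r)) := by
  have hb : ∀ r l, r + l = m → b l = b r := by
    rintro r l rfl
    rw [hbsym r (by omega), Nat.add_sub_cancel_left]
  rw [brk_eq_sum_prodColSum, brk_eq_sum_prodColSum]
  refine sum_prodColSum_eq_mul_sum_prodColSum
    (V := fun r l h => ((U r).map C).submatrix (finCongr (hb r l h)) id) ?_ ?_ ?_
  · intro r l h
    obtain rfl : l = m - (r + 1) := by omega
    have reversed_index : m - 1 - (m - (r + 1)) = r := by omega
    rw [reversed_index]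
    have hb_row : b (m - (r + 1) + 1) = b r := hb _ _ h
    have hb_col : b (m - (r + 1)) = b (r + 1) := hb _ _ (by omega)
    exact submatrix_mul_map_pderiv_eq (finCongr hb_row) (finCongr hb_col)
      (hdual r (by omega) hb_row hb_col) (a r)
  · rw [submatrix_vecMul_equiv, hU0, Matrix.map_one C C_0 C_1, vecMul_one]
    rfl
  · have hUm_mulVec : (U m).map (C (σ := Fin N)) *ᵥ 1 = (C c : MvPolynomial (Fin N) K) • 1 := by
      rw [hUm, Matrix.map_smul' C c 1 (map_mul C), Matrix.map_one C C_0 C_1, smul_mulVec,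
        one_mulVec]
    exact congrArg (· ∘ finCongr (hb m 0 rfl)) hUm_mulVec

/-- In the bracket setup, if the resolution is self-dual — `b_r = b_{m−r}` and
there are invertible scalar matrices `U_0 = 1, U_1, …, U_m = (c)` with
`U_{r−1}·φ_r = φ_{m+1−r}ᵀ·U_r` — then `[a_1, …, a_m] = c·[a_m, …, a_1]`. -/
theorem stmt8 (K : Type*) [Field K] (n : ℕ) (hn : 4 ≤ n) (m : ℕ) (hm : m = n - 2)
    (b : ℕ → ℕ) (hbpos : ∀ r, r ≤ m → 0 < b r) (hb0 : b 0 = 1) (hbm : b m = 1)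
    (φ : ∀ r : ℕ, Matrix (Fin (b r)) (Fin (b (r + 1))) (MvPolynomial (Fin (n - 1)) K))
    (hcomp : ∀ r, r + 2 ≤ m → φ r * φ (r + 1) = 0)
    (hdeg1 : ∀ p q, (φ 0 p q).IsHomogeneous 2)
    (hdegm : ∀ p q, (φ (m - 1) p q).IsHomogeneous 2)
    (hdegmid : ∀ r, 1 ≤ r → r + 2 ≤ m → ∀ p q, (φ r p q).IsHomogeneous 1)
    (hbsym : ∀ r, r ≤ m → b r = b (m - r))
    (U : ∀ r : ℕ, Matrix (Fin (b r)) (Fin (b r)) K)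
    (hU : ∀ r, r ≤ m → IsUnit (U r))
    (hU0 : U 0 = 1)
    (cval : K)
    (hUm : U m = cval • (1 : Matrix (Fin (b m)) (Fin (b m)) K))
    (hdual : ∀ s, s < m →
      ∀ (h3 : b (m - (s + 1) + 1) = b s) (h2 : b (m - (s + 1)) = b (s + 1)),
        (U s).map (fun x => (C x : MvPolynomial (Fin (n - 1)) K)) * φ s
          = (Matrix.transpose (φ (m - (s + 1)))).submatrix (Fin.cast h3.symm) (Fin.cast h2.symm)
              * (U (s + 1)).map (fun x => (C x : MvPolynomial (Fin (n - 1)) K)))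
    (a : ℕ → Fin (n - 1)) :
    brk φ m a = C cval * brk φ m (fun r => a (m - 1 - r)) :=
  stmt8_general φ hbsym U hU0 cval hUm hdual a
end

section
/- With the bracket setup below, assume additionally the reversal identity: [a_1,…,a_m] = ε·[a_m,…,a_1] for all a_1,…,a_m ∈ {1,…,n−1}, where ε = +1 if m ≡ 0,1 (mod 4) and ε = −1 if m ≡ 2,3 (mod 4). Let σ ∈ S_m be the m-cycle (1 2 ⋯ m) and define the double bracket [[a_1,…,a_m]] := Σ_{k=1}^{m} [a_{σ^{2k}(1)}, …, a_{σ^{2k}(m)}]. Then for every permutation τ ∈ S_m and all indices a_1,…,a_m ∈ {1,…,n−1} we have [[a_{τ(1)}, …, a_{τ(m)}]] = sign(τ)·[[a_1, …, a_m]]. -/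
open MvPolynomial

/-- The double bracket `[[a_1, …, a_m]] = Σ_{k=1}^{m} [a_{σ^{2k}(1)}, …, a_{σ^{2k}(m)}]`,
where `σ = (1 2 ⋯ m)`; in 0-based terms position `r` receives `a ((r + 2(k+1)) % m)`. -/
noncomputable def dbrk {K : Type*} [Field K] {N : ℕ} {b : ℕ → ℕ}
    (φ : ∀ r : ℕ, Matrix (Fin (b r)) (Fin (b (r + 1))) (MvPolynomial (Fin N) K))
    (m : ℕ) (a : ℕ → Fin N) : MvPolynomial (Fin N) K :=
  ∑ k ∈ Finset.range m, brk φ m (fun r => a ((r + 2 * (k + 1)) % m))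

/-!
View the `φ_r` as blocks of one matrix ring, so that a bracket is a product along a word.
Differentiating `φ_r φ_{r+1} = 0` twice shows that the bracket changes sign when two adjacent
letters, neither of them at an end, are exchanged; by reversal it also changes sign when the two end
letters are exchanged. Differentiating the zero product `φ_1 ∂φ_2 ⋯ ∂φ_{m-1} φ_m` twice gives
`[x,y,w] + [y,x,w] + [w,x,y] + [w,y,x] = 0`. So when two cyclically adjacent letters of a word are
exchanged, every rotation changes sign except the two having this pair in front or at the back.
These two differ by a rotation by two, so the double bracket contains them equally often, and their
defects cancel.
-/

section Derivations

variable {A σ : Type*} [Ring A] (D : σ → A →+ A) (e : ℕ → A)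

/-- The product `D_{x_0}(e_r) D_{x_1}(e_{r+1}) ⋯` along the word `x_0 x_1 ⋯`, the abstract form of
the bracket: `e` is the sequence of differentials and `D x` the derivation `∂/∂x`. -/
def wordProd : ℕ → List σ → A
  | _, [] => 1
  | r, x :: w => D x (e r) * wordProd (r + 1) w

theorem wordProd_append (r : ℕ) (u v : List σ) :
    wordProd D e r (u ++ v) = wordProd D e r u * wordProd D e (r + u.length) v := by
  induction u generalizing r with
  | nil => simp [wordProd]
  | cons x u ih => simp [wordProd, ih, mul_assoc, add_assoc, add_comm 1]

variable {D e}
variable (leibniz : ∀ x a c, D x (a * c) = D x a * c + a * D x c)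

include leibniz

theorem deriv_deriv_mul (x y : σ) (a c : A) :
    D x (D y (a * c)) =
      D x (D y a) * c + D y a * D x c + (D x a * D y c + a * D x (D y c)) := by
  simp only [leibniz, map_add]

theorem deriv_wordProd_eq_zero (x : σ) (r : ℕ) (w : List σ)
    (linear : ∀ j, r ≤ j → j < r + w.length → ∀ y, D x (D y (e j)) = 0) :
    D x (wordProd D e r w) = 0 := by
  induction w generalizing r with
  | nil => simpa [wordProd] using leibniz x 1 1
  | cons y w ih =>
    simp only [List.length_cons] at linear
    rw [wordProd, leibniz, linear r le_rfl (by lia),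
      ih (r + 1) fun j _ _ => linear j (by lia) (by lia),
      zero_mul, mul_zero, add_zero]

theorem wordProd_append_swap (u : List σ) (x y : σ) (v : List σ) {r s : ℕ}
    (hs : r + u.length = s) (complex : e s * e (s + 1) = 0)
    (linear : D x (D y (e s)) = 0) (linear_succ : D x (D y (e (s + 1))) = 0) :
    wordProd D e r (u ++ x :: y :: v) = -wordProd D e r (u ++ y :: x :: v) := by
  have anticomm : D y (e s) * D x (e (s + 1)) + D x (e s) * D y (e (s + 1)) = 0 := by
    simpa [complex, linear, linear_succ] using (deriv_deriv_mul leibniz x y (e s) (e (s + 1))).symm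
  rw [wordProd_append, wordProd_append, hs, ← mul_neg]
  simp only [wordProd, ← mul_assoc]
  rw [mul_assoc _ (D x _), eq_neg_of_add_eq_zero_right anticomm]
  noncomm_ring

variable (complex : ∀ r, e r * e (r + 1) = 0)

include complex

theorem mul_wordProd_succ (r : ℕ) (w : List σ) :
    e r * wordProd D e (r + 1) w =
      (-1 : ℤ) ^ w.length • (wordProd D e r w * e (r + w.length)) := by
  induction w generalizing r with
  | nil => simp [wordProd]
  | cons x w ih =>
    have move : e r * D x (e (r + 1)) = -(D x (e r) * e (r + 1)) :=
      eq_neg_of_add_eq_zero_right (by rw [← leibniz, complex, map_zero])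
    calc e r * wordProd D e (r + 1) (x :: w)
        = -(D x (e r) * (e (r + 1) * wordProd D e (r + 1 + 1) w)) := by
          rw [wordProd, ← mul_assoc, move, neg_mul, mul_assoc]
      _ = (-1 : ℤ) ^ (x :: w).length •
            (wordProd D e r (x :: w) * e (r + (x :: w).length)) := by
          rw [ih, wordProd, List.length_cons, pow_succ', mul_smul, neg_one_smul, mul_smul_comm,
            mul_assoc, add_assoc r 1, add_comm 1]

theorem wordProd_cons_cons_add_swap (x y : σ) (r : ℕ) (w : List σ)
    (linear : D x (D y (e (r + 1))) = 0) :
    wordProd D e r (x :: y :: w) + wordProd D e r (y :: x :: w) =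
      -((-1 : ℤ) ^ w.length •
        (D x (D y (e r)) * wordProd D e (r + 1) w * e (r + 1 + w.length))) := by
  have second := deriv_deriv_mul leibniz x y (e r) (e (r + 1))
  rw [complex, map_zero, map_zero, linear, mul_zero, add_zero] at second
  calc wordProd D e r (x :: y :: w) + wordProd D e r (y :: x :: w)
      = (D y (e r) * D x (e (r + 1)) + D x (e r) * D y (e (r + 1))) *
          wordProd D e (r + 1 + 1) w := by
        simp only [wordProd]
        noncomm_ring
    _ = -(D x (D y (e r)) * (e (r + 1) * wordProd D e (r + 1 + 1) w)) := by
        rw [← mul_assoc, ← neg_mul]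
        congr 1
        rw [eq_neg_iff_add_eq_zero, second]
        abel
    _ = _ := by rw [mul_wordProd_succ leibniz complex, mul_smul_comm, mul_assoc]

theorem wordProd_append_pair_add_swap (x y : σ) (r : ℕ) (w : List σ)
    (linear : D x (D y (e (r + w.length))) = 0) :
    wordProd D e r (w ++ [x, y]) + wordProd D e r (w ++ [y, x]) =
      -((-1 : ℤ) ^ w.length •
        (e r * wordProd D e (r + 1) w * D x (D y (e (r + 1 + w.length))))) := by
  have second := deriv_deriv_mul leibniz x y (e (r + w.length)) (e (r + w.length + 1))
  rw [complex, map_zero, map_zero, linear, zero_mul, zero_add] at second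
  have sign_sq : (-1 : ℤ) ^ w.length * (-1) ^ w.length = 1 :=
    pow_mul_pow_eq_one _ (by norm_num)
  rw [mul_wordProd_succ leibniz complex, smul_mul_assoc, smul_smul, sign_sq, one_smul,
    wordProd_append, wordProd_append, add_right_comm r 1, mul_assoc, ← mul_neg, ← mul_add]
  simp only [wordProd, mul_one]
  congr 1
  rw [eq_neg_iff_add_eq_zero, second]
  abel

-- Differentiate the zero product `e_r ⬝ D(e_{r+1}) ⋯ D(e_{r+k}) ⬝ e_{r+k+1}` twice, `k = |w|`.
theorem wordProd_rotate_two (x y : σ) (r : ℕ) (w : List σ) (hw : w ≠ [])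
    (linear : ∀ j, r + 1 ≤ j → j < r + 1 + w.length → ∀ x y, D x (D y (e j)) = 0) :
    wordProd D e r (x :: y :: w) + wordProd D e r (y :: x :: w) +
        (wordProd D e r (w ++ [x, y]) + wordProd D e r (w ++ [y, x])) =
      (-1 : ℤ) ^ w.length •
        (wordProd D e r (x :: (w ++ [y])) + wordProd D e r (y :: (w ++ [x]))) := by
  have length_pos := List.length_pos_iff.mpr hw
  have const (z : σ) : D z (wordProd D e (r + 1) w) = 0 :=
    deriv_wordProd_eq_zero leibniz z (r + 1) w fun j h₁ h₂ => linear j h₁ h₂ z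
  have product_eq_zero : e r * wordProd D e (r + 1) w * e (r + 1 + w.length) = 0 := by
    rw [mul_wordProd_succ leibniz complex, smul_mul_assoc, mul_assoc, add_right_comm, complex,
      mul_zero, smul_zero]
  have second := deriv_deriv_mul leibniz x y (e r * wordProd D e (r + 1) w) (e (r + 1 + w.length))
  simp only [product_eq_zero, map_zero, leibniz, const, mul_zero, add_zero] at second
  rw [wordProd_cons_cons_add_swap leibniz complex x y r w (linear _ le_rfl (by lia) x y),
    wordProd_append_pair_add_swap leibniz complex x y r w (linear _ (by lia) (by lia) x y),
    ← neg_add, ← smul_add, ← smul_neg]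
  congr 1
  simp only [wordProd, wordProd_append, mul_one, ← mul_assoc]
  rw [neg_eq_iff_add_eq_zero, second]
  abel

end Derivations

section Words

variable {α G : Type*} [AddCommGroup G]

/-- `f` changes sign whenever two adjacent letters of a word of length `m` are exchanged. -/
def AltOnWords (m : ℕ) (f : List α → G) : Prop :=
  ∀ u x y v, u.length + v.length + 2 = m → f (u ++ x :: y :: v) = -f (u ++ y :: x :: v)

theorem AltOnWords.move {m : ℕ} {f : List α → G} (hf : AltOnWords m f) (u : List α) (x : α)
    (w v : List α) (hm : u.length + w.length + v.length + 1 = m) :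
    f (u ++ x :: (w ++ v)) = (-1 : ℤ) ^ w.length • f (u ++ w ++ x :: v) := by
  induction w generalizing u with
  | nil => simp
  | cons y w ih =>
    have hmove := ih (u ++ [y]) (by grind)
    rw [List.cons_append, hf u x y (w ++ v) (by grind), List.length_cons, pow_succ',
      mul_smul, neg_one_smul]
    simpa using hmove

theorem AltOnWords.reverse_append {m : ℕ} {f : List α → G} (hf : AltOnWords m f)
    (w v : List α) (hm : w.length + v.length = m) :
    f (w.reverse ++ v) = (-1 : ℤ) ^ w.length.choose 2 • f (w ++ v) := by
  induction w generalizing v with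
  | nil => simp
  | cons x w ih =>
    simp only [List.length_cons] at hm
    have hmove : f (x :: (w ++ v)) = (-1 : ℤ) ^ w.length • f (w ++ x :: v) :=
      hf.move [] x w v (by grind)
    have sign_sq : (-1 : ℤ) ^ w.length * (-1) ^ w.length = 1 :=
      pow_mul_pow_eq_one _ (by norm_num)
    rw [List.reverse_cons, List.append_assoc, List.singleton_append, ih (x :: v) (by grind),
      List.cons_append, hmove, List.length_cons, Nat.choose_succ_succ', Nat.choose_one_right,
      smul_smul, pow_add, mul_right_comm, sign_sq, one_mul]

theorem exists_ofFn_comp_swap {n : ℕ} (a : Fin (n + 1) → α) (i : Fin n) :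
    ∃ u v : List α, u.length + v.length + 2 = n + 1 ∧
      List.ofFn a = u ++ a i.castSucc :: a i.succ :: v ∧
      List.ofFn (a ∘ Equiv.swap i.castSucc i.succ) = u ++ a i.succ :: a i.castSucc :: v := by
  have split (c : Fin (n + 1) → α) : List.ofFn c = (List.ofFn c).take i ++
      c i.castSucc :: c i.succ :: (List.ofFn c).drop (i + 2) := by
    conv_lhs => rw [← List.take_append_drop i (List.ofFn c)]
    rw [List.drop_eq_getElem_cons (by simp), List.drop_eq_getElem_cons (by simp),
      List.getElem_ofFn, List.getElem_ofFn]
    rfl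
  have fixed (j : Fin (n + 1)) (hj : (j : ℕ) < i ∨ (i : ℕ) + 2 ≤ j) :
      Equiv.swap i.castSucc i.succ j = j :=
    Equiv.swap_apply_of_ne_of_ne (by rw [ne_eq, Fin.ext_iff, Fin.val_castSucc]; lia)
      (by rw [ne_eq, Fin.ext_iff, Fin.val_succ]; lia)
  refine ⟨(List.ofFn a).take i, (List.ofFn a).drop (i + 2), by grind, split a, ?_⟩
  rw [split (a ∘ Equiv.swap i.castSucc i.succ)]
  congr 1
  · refine List.ext_getElem (by simp) fun j hj _ => ?_
    have hlt : j < i ∧ j < n + 1 := by simpa [-List.ofFn_succ] using hj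
    rw [List.getElem_take, List.getElem_take, List.getElem_ofFn, List.getElem_ofFn,
      Function.comp_apply, fixed ⟨j, hlt.2⟩ (Or.inl hlt.1)]
  · simp only [Function.comp_apply, Equiv.swap_apply_left, Equiv.swap_apply_right]
    congr 2
    refine List.ext_getElem (by simp) fun j hj _ => ?_
    have hlt : j < n + 1 - (i + 2) := by simpa [-List.ofFn_succ] using hj
    rw [List.getElem_drop, List.getElem_drop, List.getElem_ofFn, List.getElem_ofFn,
      Function.comp_apply, fixed ⟨i + 2 + j, by lia⟩ (Or.inr (Nat.le_add_right _ _))]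

theorem AltOnWords.comp_perm {n : ℕ} {f : List α → G} (hf : AltOnWords (n + 1) f)
    (τ : Equiv.Perm (Fin (n + 1))) (a : Fin (n + 1) → α) :
    f (List.ofFn (a ∘ τ)) = (Equiv.Perm.sign τ : ℤ) • f (List.ofFn a) := by
  have hτ : τ ∈ Submonoid.closure
      (Set.range fun i : Fin n => Equiv.swap i.castSucc i.succ) := by
    simp [Equiv.Perm.mclosure_swap_castSucc_succ]
  induction hτ using Submonoid.closure_induction generalizing a with
  | mem τ hτ =>
    obtain ⟨i, rfl⟩ := hτ
    obtain ⟨u, v, hlen, ofFn_eq, ofFn_swap_eq⟩ := exists_ofFn_comp_swap a i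
    rw [ofFn_eq, ofFn_swap_eq, hf u _ _ v hlen, Equiv.Perm.sign_swap i.castSucc_lt_succ.ne]
    simp
  | one => simp
  | mul τ ρ _ _ hτ hρ =>
    rw [Equiv.Perm.coe_mul, ← Function.comp_assoc, hρ, hτ, smul_smul, Equiv.Perm.sign_mul,
      mul_comm (Equiv.Perm.sign τ)]
    simp

theorem neg_one_pow_choose_two (m : ℕ) :
    (-1 : ℤ) ^ m.choose 2 = if m % 4 = 0 ∨ m % 4 = 1 then 1 else -1 := by
  induction m with
  | zero => simp
  | succ m ih =>
    rw [Nat.choose_succ_succ', Nat.choose_one_right, pow_add, ih, neg_one_pow_eq_ite]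
    split_ifs <;> grind

theorem neg_one_pow_choose_two_mul (k : ℕ) :
    (-1 : ℤ) ^ (k + 2).choose 2 * (-1) ^ k.choose 2 = -1 := by
  have exponent : (k + 2).choose 2 + k.choose 2 = 2 * (k + k.choose 2) + 1 := by
    have := Nat.choose_one_right k
    simp only [Nat.choose_succ_succ', Nat.choose_zero_right] at this ⊢
    lia
  rw [← pow_add, exponent, pow_succ, pow_mul, neg_one_sq, one_pow, one_mul]

-- Reversing a word is reversing its interior and exchanging its two end letters.
theorem ends_swap_of_interior_of_reverse {k : ℕ} {f : List α → G}
    (interior : ∀ p q, AltOnWords k fun w => f (p :: (w ++ [q])))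
    (rev : ∀ w, w.length = k + 2 → f w = (-1 : ℤ) ^ (k + 2).choose 2 • f w.reverse)
    (x y : α) (w : List α) (hw : w.length = k) :
    f (x :: (w ++ [y])) = -f (y :: (w ++ [x])) := by
  have interior_rev :
      f (y :: (w.reverse ++ [x])) = (-1 : ℤ) ^ k.choose 2 • f (y :: (w ++ [x])) := by
    simpa [hw] using (interior y x).reverse_append w [] (by simpa using hw)
  calc f (x :: (w ++ [y]))
      = (-1 : ℤ) ^ (k + 2).choose 2 • f (y :: (w.reverse ++ [x])) := by
        rw [rev _ (by simp [hw])]; simp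
    _ = -f (y :: (w ++ [x])) := by
        rw [interior_rev, smul_smul, neg_one_pow_choose_two_mul, neg_one_smul]

theorem sum_even_steps_eq_zero_of_periodic {t : ℕ → G} {m : ℕ} (hm : 2 < m)
    (periodic : Function.Periodic t m) (pair : t 0 + t 2 = 0)
    (zero : ∀ s < m, s ≠ 0 → s ≠ 2 → t s = 0) (c : ℕ) :
    ∑ k ∈ Finset.range m, t (c + 2 * (k + 1)) = 0 := by
  let u (n : ℕ) : G := if n % m = 0 then t 0 else 0
  have telescope (n : ℕ) : t (n + 2) = u (n + 2) - u n := by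
    have mod_iff : n % m = 0 ↔ (n + 2) % m = 2 := by
      have := Nat.ModEq.add_iff_right (n := m) (a := n) (b := 0) (Nat.ModEq.refl 2)
      simpa [Nat.ModEq, Nat.mod_eq_of_lt hm] using this.symm
    simp only [u, mod_iff, ← periodic.map_mod_nat (n + 2)]
    have := zero _ (Nat.mod_lt (n + 2) (by lia))
    grind
  calc ∑ k ∈ Finset.range m, t (c + 2 * (k + 1))
      = ∑ k ∈ Finset.range m, (u (c + 2 * (k + 1)) - u (c + 2 * k)) :=
        Finset.sum_congr rfl fun k _ => telescope (c + 2 * k)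
    _ = u (c + 2 * m) - u c := by simpa using Finset.sum_range_sub (fun k => u (c + 2 * k)) m
    _ = 0 := by simp [u]

/-- The sum of `f` over the rotations of a word by all even amounts; for the bracket this is the
double bracket. -/
def evenRotationSum (f : List α → G) (w : List α) : G :=
  ∑ k ∈ Finset.range w.length, f (w.rotate (2 * (k + 1)))

theorem rotate_swap_of_interior_of_ends {k : ℕ} {f : List α → G}
    (interior : ∀ p q, AltOnWords k fun w => f (p :: (w ++ [q])))
    (ends : ∀ x y w, w.length = k → f (x :: (w ++ [y])) = -f (y :: (w ++ [x])))
    (x y : α) {c : List α} (hc : c.length = k) {s : ℕ} (hs : s < k + 2) (hs0 : s ≠ 0)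
    (hs2 : s ≠ 2) :
    f ((x :: y :: c).rotate s) = -f ((y :: x :: c).rotate s) := by
  obtain rfl | hs3 : s = 1 ∨ 3 ≤ s := by lia
  · simpa using ends y x c hc
  obtain ⟨d, q, p, g, rfl, rfl⟩ :
      ∃ d q p g, c = d ++ [q] ++ p :: g ∧ s = d.length + 3 := by
    obtain ⟨d, q, take_eq⟩ := (List.eq_nil_or_concat' (c.take (s - 2))).resolve_left
      (List.ne_nil_of_length_pos (by grind))
    obtain ⟨p, g, drop_eq⟩ := List.exists_cons_of_length_pos (l := c.drop (s - 2)) (by grind)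
    refine ⟨d, q, p, g, by rw [← take_eq, ← drop_eq, List.take_append_drop], ?_⟩
    have := congrArg List.length take_eq
    grind
  have rotate_eq (x y : α) : (x :: y :: (d ++ [q] ++ p :: g)).rotate (d.length + 3) =
      p :: (g ++ x :: y :: d ++ [q]) := by
    simpa using List.rotate_append_length_eq (x :: y :: (d ++ [q])) (p :: g)
  rw [rotate_eq, rotate_eq]
  exact interior p q g x y d (by grind)

theorem sum_rotate_add_swap_eq_zero {k : ℕ} {f : List α → G}
    (interior : ∀ p q, AltOnWords k fun w => f (p :: (w ++ [q])))
    (ends : ∀ x y w, w.length = k → f (x :: (w ++ [y])) = -f (y :: (w ++ [x])))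
    (four_term : k ≠ 0 → ∀ x y w, w.length = k →
      f (x :: y :: w) + f (y :: x :: w) + (f (w ++ [x, y]) + f (w ++ [y, x])) = 0)
    (x y : α) {c : List α} (hc : c.length = k) (s : ℕ) :
    ∑ j ∈ Finset.range (k + 2), (f ((x :: y :: c).rotate (s + 2 * (j + 1))) +
      f ((y :: x :: c).rotate (s + 2 * (j + 1)))) = 0 := by
  let t (s : ℕ) : G := f ((x :: y :: c).rotate s) + f ((y :: x :: c).rotate s)
  change ∑ j ∈ Finset.range (k + 2), t (s + 2 * (j + 1)) = 0
  have periodic : Function.Periodic t (k + 2) := fun s => by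
    have (x y : α) : (x :: y :: c).rotate (s + (k + 2)) = (x :: y :: c).rotate s := by
      simp [← List.rotate_mod _ (s + (k + 2)), ← List.rotate_mod _ s, hc]
    simp only [t, this]
  have zero (s : ℕ) (hs : s < k + 2) (hs0 : s ≠ 0) (hs2 : s ≠ 2) : t s = 0 := by
    simp [t, rotate_swap_of_interior_of_ends interior ends x y hc hs hs0 hs2]
  rcases eq_or_ne k 0 with rfl | hk
  · have t_zero : t 0 = 0 := by
      obtain rfl := List.length_eq_zero_iff.mp hc
      simpa [t, ← eq_neg_iff_add_eq_zero] using ends x y [] rfl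
    refine Finset.sum_eq_zero fun j _ => ?_
    rw [← periodic.map_mod_nat]
    rcases Nat.mod_two_eq_zero_or_one (s + 2 * (j + 1)) with even | odd
    · rw [even, t_zero]
    · rw [odd, zero 1 (by lia) (by lia) (by lia)]
  · refine sum_even_steps_eq_zero_of_periodic (by lia) periodic ?_ zero s
    simpa [t] using four_term hk x y c hc

theorem altOnWords_evenRotationSum {k : ℕ} {f : List α → G}
    (interior : ∀ p q, AltOnWords k fun w => f (p :: (w ++ [q])))
    (ends : ∀ x y w, w.length = k → f (x :: (w ++ [y])) = -f (y :: (w ++ [x])))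
    (four_term : k ≠ 0 → ∀ x y w, w.length = k →
      f (x :: y :: w) + f (y :: x :: w) + (f (w ++ [x, y]) + f (w ++ [y, x])) = 0) :
    AltOnWords (k + 2) (evenRotationSum f) := by
  intro u x y v hm
  have rotate_eq (x y : α) (j : ℕ) :
      (u ++ x :: y :: v).rotate j = (x :: y :: (v ++ u)).rotate (v.length + 2 + j) := by
    rw [← List.rotate_rotate]
    congr 1
    simp
  have length_eq (x y : α) : (u ++ x :: y :: v).length = k + 2 := by grind
  simp only [evenRotationSum, length_eq, rotate_eq]
  rw [eq_neg_iff_add_eq_zero, ← Finset.sum_add_distrib]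
  exact sum_rotate_add_swap_eq_zero interior ends four_term x y (by rw [List.length_append]; lia) _

end Words

section BlockMatrices

open Matrix

/-- The index set of the standard basis of `⨁_{s ≤ m} R ^ (b s)`. -/
abbrev TotalIndex (b : ℕ → ℕ) (m : ℕ) : Type := Σ s : Fin (m + 1), Fin (b s)

/-- The matrix of the inclusion of the `s`-th summand into `⨁_{s ≤ m} R ^ (b s)`, acting on row
vectors; it is `0` when `m < s`. -/
def levelIncl (R : Type*) [CommRing R] (b : ℕ → ℕ) (m s : ℕ) :
    Matrix (Fin (b s)) (TotalIndex b m) R :=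
  Matrix.of fun i y => if (y.1 : ℕ) = s ∧ (y.2 : ℕ) = i then 1 else 0

/-- The sum of the entries of the block of a matrix from level `0` to level `m`,
which reads the bracket off a product of `m` differentials. -/
def cornerSum (R : Type*) [CommRing R] (b : ℕ → ℕ) (m : ℕ) :
    Matrix (TotalIndex b m) (TotalIndex b m) R →+ R where
  toFun Z := (1 ᵥ* levelIncl R b m 0) ᵥ* Z ⬝ᵥ ((levelIncl R b m m)ᵀ *ᵥ 1)
  map_zero' := by simp
  map_add' Y Z := by rw [vecMul_add, add_dotProduct]

variable {R : Type*} [CommRing R] {b : ℕ → ℕ}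

theorem levelIncl_eq_zero {m s : ℕ} (h : m < s) : levelIncl R b m s = 0 := by
  ext i y
  exact if_neg fun hy => by lia

theorem levelIncl_mul_transpose {m s : ℕ} (h : s ≤ m) :
    levelIncl R b m s * (levelIncl R b m s)ᵀ = 1 := by
  let level (i : Fin (b s)) : TotalIndex b m := ⟨⟨s, Nat.lt_succ_of_le h⟩, i⟩
  have level_injective : Function.Injective level := fun i j h => by simpa [level] using h
  have levelIncl_eq : levelIncl R b m s = (1 : Matrix _ _ R).submatrix level id := by
    ext i ⟨⟨t, ht⟩, j⟩
    rcases eq_or_ne t s with rfl | hts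
    · simp [levelIncl, level, Matrix.one_apply, Fin.ext_iff, eq_comm]
    · simp [levelIncl, level, hts, hts.symm]
  rw [levelIncl_eq, transpose_submatrix, ← submatrix_mul _ _ _ _ _ Function.bijective_id,
    transpose_one, Matrix.one_mul, submatrix_one _ level_injective]

/-- The matrix `X : R ^ (b r) → R ^ (b (r + 1))` seen as an endomorphism of `⨁_{s ≤ m} R ^ (b s)`,
which makes all the differentials of a complex elements of one ring. -/
def blockMatrix (m r : ℕ) (X : Matrix (Fin (b r)) (Fin (b (r + 1))) R) :
    Matrix (TotalIndex b m) (TotalIndex b m) R :=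
  (levelIncl R b m r)ᵀ * X * levelIncl R b m (r + 1)

theorem levelIncl_mul_blockMatrix {m r : ℕ} (h : r ≤ m)
    (X : Matrix (Fin (b r)) (Fin (b (r + 1))) R) :
    levelIncl R b m r * blockMatrix m r X = X * levelIncl R b m (r + 1) := by
  rw [blockMatrix, ← Matrix.mul_assoc, ← Matrix.mul_assoc, levelIncl_mul_transpose h,
    Matrix.one_mul]

theorem blockMatrix_mul_blockMatrix_eq_zero {m : ℕ}
    (φ : ∀ r : ℕ, Matrix (Fin (b r)) (Fin (b (r + 1))) R)
    (hcomp : ∀ r, r + 2 ≤ m → φ r * φ (r + 1) = 0) (r : ℕ) :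
    blockMatrix m r (φ r) * blockMatrix m (r + 1) (φ (r + 1)) = 0 := by
  rcases le_or_gt (r + 2) m with h | h
  · rw [blockMatrix, Matrix.mul_assoc, levelIncl_mul_blockMatrix (by lia), ← Matrix.mul_assoc,
      Matrix.mul_assoc _ (φ r), hcomp r h, Matrix.mul_zero, Matrix.zero_mul]
  · rw [blockMatrix, blockMatrix, levelIncl_eq_zero h, Matrix.mul_zero, Matrix.mul_zero]

variable {K : Type*} [CommRing K] [Algebra K R] (d : Derivation K R R)

theorem map_derivation_mul {l p q : Type*} [Fintype p] (X : Matrix l p R) (Y : Matrix p q R) :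
    (X * Y).map d = X.map d * Y + X * Y.map d := by
  ext i j
  simp [Matrix.mul_apply, Finset.sum_add_distrib, add_comm, mul_comm]

theorem levelIncl_map_derivation (m s : ℕ) : (levelIncl R b m s).map d = 0 := by
  ext i y
  simp [levelIncl, apply_ite d]

theorem blockMatrix_map_derivation (m r : ℕ) (X : Matrix (Fin (b r)) (Fin (b (r + 1))) R) :
    (blockMatrix m r X).map d = blockMatrix m r (X.map d) := by
  rw [blockMatrix, map_derivation_mul, map_derivation_mul, transpose_map,
    levelIncl_map_derivation, levelIncl_map_derivation]
  simp [blockMatrix]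

end BlockMatrices

section Brackets

open Matrix

theorem pderiv_pderiv_eq_zero_of_isHomogeneous_one_s9 {K σ : Type*} [CommSemiring K]
    {p : MvPolynomial σ K} (hp : p.IsHomogeneous 1) (x y : σ) : pderiv x (pderiv y p) = 0 := by
  have const : (pderiv y p).totalDegree = 0 :=
    (totalDegree_zero_iff_isHomogeneous _).mpr hp.pderiv
  rw [totalDegree_eq_zero_iff_eq_C.mp const, pderiv_C]

variable {K : Type*} [Field K] {N : ℕ} {b : ℕ → ℕ}

/-- The entrywise partial derivative of a square matrix of polynomials. -/
noncomputable def entryDeriv {ι : Type*} (x : Fin N) :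
    Matrix ι ι (MvPolynomial (Fin N) K) →+ Matrix ι ι (MvPolynomial (Fin N) K) :=
  (pderiv x).toLinearMap.toAddMonoidHom.mapMatrix

theorem entryDeriv_mul {ι : Type*} [Fintype ι] (x : Fin N)
    (Y Z : Matrix ι ι (MvPolynomial (Fin N) K)) :
    entryDeriv x (Y * Z) = entryDeriv x Y * Z + Y * entryDeriv x Z :=
  map_derivation_mul (pderiv x) Y Z

theorem entryDeriv_blockMatrix (x : Fin N) (m r : ℕ)
    (X : Matrix (Fin (b r)) (Fin (b (r + 1))) (MvPolynomial (Fin N) K)) :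
    entryDeriv x (blockMatrix m r X) = blockMatrix m r (X.map (pderiv x)) :=
  blockMatrix_map_derivation (pderiv x) m r X

theorem entryDeriv_entryDeriv_blockMatrix_eq_zero {r : ℕ}
    {X : Matrix (Fin (b r)) (Fin (b (r + 1))) (MvPolynomial (Fin N) K)}
    (hX : ∀ p q, (X p q).IsHomogeneous 1) (m : ℕ) (x y : Fin N) :
    entryDeriv x (entryDeriv y (blockMatrix m r X)) = 0 := by
  have second : (X.map (pderiv y)).map (pderiv x) = 0 :=
    Matrix.ext fun p q => pderiv_pderiv_eq_zero_of_isHomogeneous_one_s9 (hX p q) x y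
  rw [entryDeriv_blockMatrix, entryDeriv_blockMatrix, second, blockMatrix, Matrix.mul_zero,
    Matrix.zero_mul]

variable (φ : ∀ r : ℕ, Matrix (Fin (b r)) (Fin (b (r + 1))) (MvPolynomial (Fin N) K)) (m : ℕ)

/-- The bracket `[a_1, …, a_m]` as a function of the word `a_1 ⋯ a_m`; only words of length `m` are
meaningful. -/
noncomputable def brkWord (w : List (Fin N)) : MvPolynomial (Fin N) K :=
  cornerSum _ b m (wordProd entryDeriv (fun r => blockMatrix m r (φ r)) 0 w)

variable {m}

theorem brkVec_vecMul_levelIncl (a : ℕ → Fin N) {r : ℕ} (hr : r ≤ m) :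
    brkVec φ a r ᵥ* levelIncl _ b m r = (1 ᵥ* levelIncl _ b m 0) ᵥ*
      wordProd entryDeriv (fun r => blockMatrix m r (φ r)) 0 ((List.range r).map a) := by
  induction r with
  | zero => exact (vecMul_one _).symm
  | succ r ih =>
    rw [List.range_succ, List.map_append, wordProd_append, ← vecMul_vecMul, ← ih (by lia)]
    simp only [List.map_cons, List.map_nil, wordProd, mul_one, List.length_map, List.length_range,
      zero_add]
    rw [entryDeriv_blockMatrix, vecMul_vecMul, levelIncl_mul_blockMatrix (by lia), ← vecMul_vecMul]
    rfl

theorem brk_eq_brkWord (a : ℕ → Fin N) : brk φ m a = brkWord φ m ((List.range m).map a) := by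
  change _ = _ ᵥ* _ ⬝ᵥ _
  rw [← brkVec_vecMul_levelIncl φ a le_rfl, ← dotProduct_mulVec, mulVec_mulVec,
    levelIncl_mul_transpose le_rfl, one_mulVec, dotProduct_one]
  rfl

theorem dbrk_eq_evenRotationSum (a : ℕ → Fin N) :
    dbrk φ m a = evenRotationSum (brkWord φ m) ((List.range m).map a) := by
  have rotate_eq (s : ℕ) : ((List.range m).map a).rotate s =
      (List.range m).map fun r => a ((r + s) % m) :=
    List.ext_getElem (by simp) fun j _ _ => by simp [List.getElem_rotate]
  simp only [dbrk, evenRotationSum, brk_eq_brkWord, rotate_eq, List.length_map, List.length_range]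

theorem brkWord_eq_smul_reverse {ε : ℤ}
    (hrev : ∀ a : ℕ → Fin N, brk φ m a = ε • brk φ m (fun r => a (m - 1 - r)))
    {w : List (Fin N)} (hw : w.length = m) (hne : w ≠ []) :
    brkWord φ m w = ε • brkWord φ m w.reverse := by
  let a (r : ℕ) : Fin N := w.getD r (w.head hne)
  have a_eq {r : ℕ} (hr : r < w.length) : a r = w[r] := List.getD_eq_getElem _ _ hr
  have eq_map : (List.range m).map a = w :=
    List.ext_getElem (by simp [hw]) fun j _ hj => by simp [a_eq hj]
  have reverse_eq_map : (List.range m).map (fun r => a (m - 1 - r)) = w.reverse :=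
    List.ext_getElem (by simp [hw]) fun j _ hj => by
      rw [List.length_reverse] at hj
      simp [a_eq (show m - 1 - j < w.length by lia), hw]
  rw [← reverse_eq_map, ← brk_eq_brkWord, ← hrev, brk_eq_brkWord, eq_map]

variable {φ} {k : ℕ} (hcomp : ∀ r, r + 2 ≤ k + 2 → φ r * φ (r + 1) = 0)
  (hdegmid : ∀ r, 1 ≤ r → r + 2 ≤ k + 2 → ∀ p q, (φ r p q).IsHomogeneous 1)

include hcomp hdegmid

theorem altOnWords_brkWord_interior (p q : Fin N) :
    AltOnWords k fun w => brkWord φ (k + 2) (p :: (w ++ [q])) := by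
  intro u x y v hlen
  have linear (r : ℕ) (h : 1 ≤ r) (hr : r ≤ k) :
      entryDeriv x (entryDeriv y (blockMatrix (k + 2) r (φ r))) = 0 :=
    entryDeriv_entryDeriv_blockMatrix_eq_zero (hdegmid r h (by lia)) (k + 2) x y
  have swap := wordProd_append_swap (e := fun r => blockMatrix (k + 2) r (φ r)) entryDeriv_mul
    (p :: u) x y (v ++ [q]) (r := 0) (s := u.length + 1) (by simp)
    (blockMatrix_mul_blockMatrix_eq_zero φ hcomp _) (linear _ (by lia) (by lia))
    (linear _ (by lia) (by lia))
  simpa [brkWord] using congrArg (cornerSum _ b (k + 2)) swap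

theorem brkWord_four_term (hk : k ≠ 0)
    (ends : ∀ x y w, w.length = k →
      brkWord φ (k + 2) (x :: (w ++ [y])) = -brkWord φ (k + 2) (y :: (w ++ [x])))
    (x y : Fin N) (w : List (Fin N)) (hw : w.length = k) :
    brkWord φ (k + 2) (x :: y :: w) + brkWord φ (k + 2) (y :: x :: w) +
      (brkWord φ (k + 2) (w ++ [x, y]) + brkWord φ (k + 2) (w ++ [y, x])) = 0 := by
  have rotate := congrArg (cornerSum _ b (k + 2)) <|
    wordProd_rotate_two entryDeriv_mul (blockMatrix_mul_blockMatrix_eq_zero φ hcomp) x y 0 w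
      (List.ne_nil_of_length_pos (by lia)) fun r h hr =>
        entryDeriv_entryDeriv_blockMatrix_eq_zero (hdegmid r (by lia) (by lia)) (k + 2)
  simp only [map_add, map_zsmul] at rotate
  change _ = (-1) ^ w.length • (brkWord φ _ _ + brkWord φ _ _) at rotate
  rwa [ends x y w hw, neg_add_cancel, smul_zero] at rotate

end Brackets

theorem stmt9_general {K : Type*} [Field K] {N m : ℕ} (hm : 2 ≤ m) {b : ℕ → ℕ}
    (φ : ∀ r : ℕ, Matrix (Fin (b r)) (Fin (b (r + 1))) (MvPolynomial (Fin N) K))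
    (hcomp : ∀ r, r + 2 ≤ m → φ r * φ (r + 1) = 0)
    (hdegmid : ∀ r, 1 ≤ r → r + 2 ≤ m → ∀ p q, (φ r p q).IsHomogeneous 1)
    (hrev : ∀ a : ℕ → Fin N,
      brk φ m a = (-1 : ℤ) ^ m.choose 2 • brk φ m (fun r => a (m - 1 - r)))
    (τ : Equiv.Perm (Fin m)) (a : ℕ → Fin N) :
    dbrk φ m (fun r => if h : r < m then a (τ ⟨r, h⟩ : ℕ) else a r)
      = (Equiv.Perm.sign τ : ℤ) • dbrk φ m a := by
  obtain ⟨k, rfl⟩ : ∃ k, m = k + 2 := ⟨m - 2, by lia⟩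
  have interior := altOnWords_brkWord_interior hcomp hdegmid
  have ends := ends_swap_of_interior_of_reverse interior fun w hw =>
    brkWord_eq_smul_reverse φ hrev hw (List.ne_nil_of_length_pos (by lia))
  have alternating := altOnWords_evenRotationSum interior ends fun hk =>
    brkWord_four_term hcomp hdegmid hk ends
  have word_eq (c : ℕ → Fin N) :
      (List.range (k + 2)).map c = List.ofFn fun i : Fin (k + 2) => c i :=
    List.ext_getElem (by simp) fun j _ _ => by simp [-List.ofFn_succ]
  rw [dbrk_eq_evenRotationSum, dbrk_eq_evenRotationSum, word_eq, word_eq,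
    ← alternating.comp_perm τ]
  simp only [Fin.is_lt, dite_true, Fin.eta, Function.comp_def]

/-- In the bracket setup, assuming the reversal identity
`[a_1,…,a_m] = ε·[a_m,…,a_1]` with `ε = +1` for `m ≡ 0,1 (mod 4)` and `ε = −1` for
`m ≡ 2,3 (mod 4)`, the double bracket is alternating: for every `τ ∈ S_m`,
`[[a_{τ(1)}, …, a_{τ(m)}]] = sign(τ)·[[a_1, …, a_m]]`. -/
theorem stmt9 (K : Type*) [Field K] (n : ℕ) (hn : 4 ≤ n) (m : ℕ) (hm : m = n - 2)
    (b : ℕ → ℕ) (hbpos : ∀ r, r ≤ m → 0 < b r) (hb0 : b 0 = 1) (hbm : b m = 1)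
    (φ : ∀ r : ℕ, Matrix (Fin (b r)) (Fin (b (r + 1))) (MvPolynomial (Fin (n - 1)) K))
    (hcomp : ∀ r, r + 2 ≤ m → φ r * φ (r + 1) = 0)
    (hdeg1 : ∀ p q, (φ 0 p q).IsHomogeneous 2)
    (hdegm : ∀ p q, (φ (m - 1) p q).IsHomogeneous 2)
    (hdegmid : ∀ r, 1 ≤ r → r + 2 ≤ m → ∀ p q, (φ r p q).IsHomogeneous 1)
    (ε : ℤ) (hε : ε = if m % 4 = 0 ∨ m % 4 = 1 then 1 else -1)
    (hrev : ∀ a : ℕ → Fin (n - 1), brk φ m a = ε • brk φ m (fun r => a (m - 1 - r)))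
    (τ : Equiv.Perm (Fin m)) (a : ℕ → Fin (n - 1)) :
    dbrk φ m (fun r => if h : r < m then a (τ ⟨r, h⟩ : ℕ) else a r)
      = (Equiv.Perm.sign τ : ℤ) • dbrk φ m a := by
  simp only [hε, ← neg_one_pow_choose_two] at hrev
  exact stmt9_general (by lia) φ hcomp hdegmid hrev τ a
end

section
/- With the bracket setup below, assume the reversal identity [a_1,…,a_m] = ε·[a_m,…,a_1] for all indices, where ε = +1 if m ≡ 0,1 (mod 4) and ε = −1 if m ≡ 2,3 (mod 4). Define [[a_1,…,a_m]] := Σ_{k=1}^{m} [a_{σ^{2k}(1)}, …, a_{σ^{2k}(m)}] where σ = (1 2 ⋯ m) ∈ S_m, and for 1 ≤ j ≤ n−1 set Ω_j := (−1)^j · [[1, 2, …, ĵ, …, n−1]] (the hat denoting omission of j). Let g = (g_{ij}) ∈ GL_{n−1}(K) and set x'_j := Σ_{i=1}^{n−1} g_{ij}·x_i. Define φ'_r(x_1,…,x_{n−1}) := φ_r(x'_1,…,x'_{n−1}) for 1 ≤ r ≤ m, and let Ω'_1,…,Ω'_{n−1} be the quadratic forms obtained from φ'_1,…,φ'_m by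 the same construction. Then for every 1 ≤ j ≤ n−1: Ω'_j(x_1,…,x_{n−1}) = det(g) · Σ_{k=1}^{n−1} (g^{−1})_{kj} · Ω_k(x'_1,…,x'_{n−1}). Equivalently, Σ_j x_j* ⊗ Ω'_j = det(g)·(g · Σ_j x_j* ⊗ Ω_j) under the standard action of GL_{n−1} on V* ⊗ S²V, where V = ⟨x_1,…,x_{n−1}⟩. -/
open MvPolynomial

/-- The 0-based sequence `1, 2, …, ĵ, …, n−1` (omission of `j`): position `r` holds `r`
for `r < j`, and `r + 1` for `j ≤ r < N − 1` (junk value `j` beyond). -/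
def omitIdx {N : ℕ} (j : Fin N) : ℕ → Fin N := fun r =>
  if h : r < (j : ℕ) then ⟨r, lt_trans h j.isLt⟩
  else if h2 : r + 1 < N then ⟨r + 1, h2⟩ else j

/-- The quadratic form `Ω_j = (−1)^j·[[1, 2, …, ĵ, …, n−1]]` (0-based `j`, whence the
exponent `j + 1`). -/
noncomputable def OmegaForm {K : Type*} [Field K] {N : ℕ} {b : ℕ → ℕ}
    (φ : ∀ r : ℕ, Matrix (Fin (b r)) (Fin (b (r + 1))) (MvPolynomial (Fin N) K))
    (m : ℕ) (j : Fin N) : MvPolynomial (Fin N) K :=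
  (-1 : MvPolynomial (Fin N) K) ^ ((j : ℕ) + 1) * dbrk φ m (omitIdx j)

/-!
Polarising `φ_r φ_{r+1} = 0` gives relations between the directional derivatives `∂_v φ_r`, valid in
every characteristic. Write `[v_1, …, v_m]` for the product `(∂_{v_1} φ_1) ⋯ (∂_{v_m} φ_m)`. Between
linear matrices `∂_v φ_r ∂_v φ_{r+1} = 0`, so `[…, v, v, …] = 0` unless `v, v` is at one of the two
ends. At the ends, `∂_v φ_1 ∂_v φ_2 = -φ_1(v) φ_2`, and moving the undifferentiated factor through
the word shows that `[v, v, c]` is antisymmetric in `c`. With the reversal identity this yields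
`[v, v, c] + [c, v, v] = 0` and `[v, c, v] = 0`. When two cyclically adjacent arguments agree, the
sum of the brackets over the even rotations therefore telescopes to zero, i.e. the double bracket is
an alternating function of `m` vectors in a space of dimension `m + 1`. Such a function is
determined by its values on the `m`-subsets of a basis, with the `m × m` minors as coefficients. By
the chain rule, a linear change of coordinates `g` replaces each `e_i` by the `i`-th row of `g`, and
the minors of these rows are, up to sign, the entries of the adjugate of `g`.
-/

section Polarization

variable {σ K : Type*} [CommRing K]

lemma pderiv_comm (i j : σ) (F : MvPolynomial σ K) :
    pderiv i (pderiv j F) = pderiv j (pderiv i F) := by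
  classical
  induction F using MvPolynomial.induction_on with
  | C c => simp
  | add F G hF hG => simp only [map_add, hF, hG]
  | mul_X F k hF =>
    simp only [pderiv_mul, map_add, hF, pderiv_X, Pi.single_apply, apply_ite (pderiv _),
      pderiv_one, map_zero, ite_self]
    ring

/-- The value of a polynomial at `v`, as a constant polynomial. On a quadratic form it is the
second-order Taylor coefficient in the direction `v`, which makes sense in all characteristics. -/
noncomputable def constEval (v : σ → K) : MvPolynomial σ K →+* MvPolynomial σ K :=
  C.comp (eval v)

lemma constEval_apply (v : σ → K) (F : MvPolynomial σ K) : constEval v F = C (eval v F) := rfl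

lemma constEval_of_isHomogeneous_zero {F : MvPolynomial σ K} (hF : F.IsHomogeneous 0)
    (v : σ → K) : constEval v F = F := by
  rw [constEval_apply,
    totalDegree_eq_zero_iff_eq_C.mp ((totalDegree_zero_iff_isHomogeneous _).mpr hF), eval_C]

variable [Fintype σ]

/-- The directional derivative `∂_v = ∑ i, v i • ∂/∂x_i`, linearly in the direction `v`. -/
noncomputable def dirDeriv :
    (σ → K) →ₗ[K] Derivation K (MvPolynomial σ K) (MvPolynomial σ K) :=
  Fintype.linearCombination K pderiv

lemma dirDeriv_apply (v : σ → K) (F : MvPolynomial σ K) :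
    dirDeriv v F = ∑ i, v i • pderiv i F := by
  rw [dirDeriv, Fintype.linearCombination_apply]
  exact map_sum (AddMonoidHom.mk'
    (fun δ : Derivation K (MvPolynomial σ K) (MvPolynomial σ K) => δ F) fun _ _ => rfl) _ _

lemma dirDeriv_single [DecidableEq σ] (i : σ) :
    dirDeriv (Pi.single i 1 : σ → K) = pderiv i := by
  simp [dirDeriv]

lemma pderiv_dirDeriv (i : σ) (v : σ → K) (F : MvPolynomial σ K) :
    pderiv i (dirDeriv v F) = dirDeriv v (pderiv i F) := by
  simp only [dirDeriv_apply, map_sum, Derivation.map_smul, pderiv_comm i]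

lemma isHomogeneous_dirDeriv {d : ℕ} {F : MvPolynomial σ K} (hF : F.IsHomogeneous d) (v : σ → K) :
    (dirDeriv v F).IsHomogeneous (d - 1) := by
  rw [dirDeriv_apply]
  exact (homogeneousSubmodule σ K (d - 1)).sum_mem fun i _ =>
    Submodule.smul_mem _ _ hF.pderiv

lemma sum_X_mul_pderiv_of_isHomogeneous_one {F : MvPolynomial σ K} (hF : F.IsHomogeneous 1) :
    ∑ i, X i * pderiv i F = F := by
  simpa using hF.sum_X_mul_pderiv

lemma dirDeriv_of_isHomogeneous_one {F : MvPolynomial σ K} (hF : F.IsHomogeneous 1) (v : σ → K) :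
    dirDeriv v F = constEval v F := by
  conv_rhs => rw [← sum_X_mul_pderiv_of_isHomogeneous_one hF]
  simp only [dirDeriv_apply, map_sum, map_mul, constEval_of_isHomogeneous_zero hF.pderiv,
    constEval_apply v (X _), eval_X, smul_eq_C_mul]

lemma sum_X_mul_constEval_pderiv_of_isHomogeneous_one {F : MvPolynomial σ K}
    (hF : F.IsHomogeneous 1) (v : σ → K) : ∑ i, X i * constEval v (pderiv i F) = F := by
  simp only [constEval_of_isHomogeneous_zero hF.pderiv, sum_X_mul_pderiv_of_isHomogeneous_one hF]

lemma sum_X_mul_constEval_pderiv_of_isHomogeneous_two {F : MvPolynomial σ K}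
    (hF : F.IsHomogeneous 2) (v : σ → K) :
    ∑ i, X i * constEval v (pderiv i F) = dirDeriv v F := by
  simp only [← dirDeriv_of_isHomogeneous_one hF.pderiv, ← pderiv_dirDeriv,
    sum_X_mul_pderiv_of_isHomogeneous_one (isHomogeneous_dirDeriv hF v)]

end Polarization

section MatrixRelations

variable {σ K ι κ τ : Type*} [CommRing K]

lemma map_derivation_map_constEval (δ : Derivation K (MvPolynomial σ K) (MvPolynomial σ K))
    (A : Matrix ι κ (MvPolynomial σ K)) (v : σ → K) :
    (A.map (constEval v)).map δ = 0 := by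
  ext1 s t
  simp [constEval_apply]

lemma map_dirDeriv_of_isHomogeneous_one [Fintype σ] {A : Matrix ι κ (MvPolynomial σ K)}
    (hA : ∀ s t, (A s t).IsHomogeneous 1) (v : σ → K) :
    A.map (dirDeriv v) = A.map (constEval v) := by
  ext1 s t
  exact dirDeriv_of_isHomogeneous_one (hA s t) v

variable [Fintype κ] {A : Matrix ι κ (MvPolynomial σ K)} {B : Matrix κ τ (MvPolynomial σ K)}

lemma map_derivation_mul_s10 (δ : Derivation K (MvPolynomial σ K) (MvPolynomial σ K))
    (A : Matrix ι κ (MvPolynomial σ K)) (B : Matrix κ τ (MvPolynomial σ K)) :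
    (A * B).map δ = A * B.map δ + A.map δ * B := by
  ext1 s t
  simp [Matrix.mul_apply, Finset.sum_add_distrib, mul_comm]

lemma mul_map_derivation_add_eq_zero (hAB : A * B = 0)
    (δ : Derivation K (MvPolynomial σ K) (MvPolynomial σ K)) :
    A * B.map δ + A.map δ * B = 0 := by
  rw [← map_derivation_mul_s10, hAB, Matrix.map_zero _ (map_zero δ)]

variable [Fintype σ]

lemma map_dirDeriv_mul_map_dirDeriv_eq_zero (hAB : A * B = 0)
    (hA : ∀ s t, (A s t).IsHomogeneous 1) (hB : ∀ s t, (B s t).IsHomogeneous 1) (v : σ → K) :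
    A.map (dirDeriv v) * B.map (dirDeriv v) = 0 := by
  rw [map_dirDeriv_of_isHomogeneous_one hA, map_dirDeriv_of_isHomogeneous_one hB,
    ← Matrix.map_mul, hAB, Matrix.map_zero _ (map_zero _)]

-- Differentiating `A * B = 0` along each `x_i`, evaluating at `v` and pairing with `x_i`.
lemma map_dirDeriv_mul_map_dirDeriv_add_eq_zero (hAB : A * B = 0)
    (hA : ∀ s t, (A s t).IsHomogeneous 2) (hB : ∀ s t, (B s t).IsHomogeneous 1) (v : σ → K) :
    A.map (dirDeriv v) * B.map (dirDeriv v) + A.map (constEval v) * B = 0 := by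
  have deriv_eval (i : σ) : A.map (constEval v) * (B.map (pderiv i)).map (constEval v) +
      (A.map (pderiv i)).map (constEval v) * B.map (constEval v) = 0 := by
    rw [← Matrix.map_mul, ← Matrix.map_mul, ← Matrix.map_add _ (map_add _),
      mul_map_derivation_add_eq_zero hAB (pderiv i), Matrix.map_zero _ (map_zero _)]
  have sum_A : ∑ i, (X i : MvPolynomial σ K) • (A.map (pderiv i)).map (constEval v) =
      A.map (dirDeriv v) := by
    ext1 s t
    simp [Matrix.sum_apply, ← sum_X_mul_constEval_pderiv_of_isHomogeneous_two (hA s t)]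
  have sum_B : ∑ i, (X i : MvPolynomial σ K) • (B.map (pderiv i)).map (constEval v) = B := by
    ext1 s t
    simp [Matrix.sum_apply, sum_X_mul_constEval_pderiv_of_isHomogeneous_one (hB s t)]
  calc A.map (dirDeriv v) * B.map (dirDeriv v) + A.map (constEval v) * B
      = ∑ i, (X i : MvPolynomial σ K) • (A.map (constEval v) *
            (B.map (pderiv i)).map (constEval v) +
          (A.map (pderiv i)).map (constEval v) * B.map (constEval v)) := by
        conv_lhs => rw [map_dirDeriv_of_isHomogeneous_one hB, ← sum_A, add_comm]
        conv_lhs => enter [1, 2]; rw [← sum_B]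
        simp only [Matrix.sum_mul, Matrix.mul_sum, Matrix.smul_mul, Matrix.mul_smul, smul_add,
          Finset.sum_add_distrib]
    _ = 0 := by simp only [deriv_eval, smul_zero, Finset.sum_const_zero]

lemma polarized_map_dirDeriv_mul_add_eq_zero (hAB : A * B = 0)
    (hB : ∀ s t, (B s t).IsHomogeneous 1) (v w : σ → K) :
    A.map (dirDeriv v) * B.map (dirDeriv w) + A.map (dirDeriv w) * B.map (dirDeriv v) +
      (A.map (dirDeriv v)).map (dirDeriv w) * B = 0 := by
  have h := congrArg (·.map (dirDeriv w)) (mul_map_derivation_add_eq_zero hAB (dirDeriv v))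
  simp only [Matrix.map_add _ (map_add _), map_derivation_mul_s10, Matrix.map_zero _ (map_zero _),
    map_dirDeriv_of_isHomogeneous_one hB v, map_derivation_map_constEval, Matrix.mul_zero,
    zero_add] at h
  rw [map_dirDeriv_of_isHomogeneous_one hB v, ← h]
  abel

lemma map_dirDeriv_dirDeriv_mul_add_eq_zero (hAB : A * B = 0)
    (hA : ∀ s t, (A s t).IsHomogeneous 2) (hB : ∀ s t, (B s t).IsHomogeneous 1) (v w : σ → K) :
    (A.map (dirDeriv v)).map (dirDeriv w) * B.map (dirDeriv v) +
      A.map (constEval v) * B.map (dirDeriv w) = 0 := by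
  have h := congrArg (·.map (dirDeriv w)) (map_dirDeriv_mul_map_dirDeriv_add_eq_zero hAB hA hB v)
  simpa only [Matrix.map_add _ (map_add _), map_derivation_mul_s10, Matrix.map_zero _ (map_zero _),
    map_dirDeriv_of_isHomogeneous_one hB v, map_derivation_map_constEval, Matrix.mul_zero,
    Matrix.zero_mul, zero_add, add_zero] using h

end MatrixRelations

section Words

variable {R : Type*} [CommRing R] {b : ℕ → ℕ}

/-- Families of matrices of the shapes of a sequence of free modules of ranks `b 0, b 1, …`. They
serve as the letters of words: the letter in position `r` contributes its `r`-th matrix. -/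
abbrev MatrixFamily (b : ℕ → ℕ) (R : Type*) : Type _ :=
  ∀ r, Matrix (Fin (b r)) (Fin (b (r + 1))) R

/-- The column vector `A_1 r * A_2 (r + 1) * ⋯ * (1, …, 1)ᵀ` of a list of letters starting in
position `r`. -/
def tailVec : List (MatrixFamily b R) → ∀ r, Fin (b r) → R
  | [], _ => 1
  | A :: l, r => (A r).mulVec (tailVec l (r + 1))

/-- The sum of all entries of the matrix product `A_1 0 * A_2 1 * ⋯` of a list of letters, which
is its only entry when the product is a `1 × 1` matrix. -/
def word (l : List (MatrixFamily b R)) : R :=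
  ∑ i, tailVec l 0 i

lemma tailVec_cons_cons (A B : MatrixFamily b R) (l : List (MatrixFamily b R)) (r : ℕ) :
    tailVec (A :: B :: l) r = (A r * B (r + 1)).mulVec (tailVec l (r + 2)) :=
  Matrix.mulVec_mulVec _ _ _

lemma exists_tailVec_append_eq (u : List (MatrixFamily b R)) {r s : ℕ} (hs : r + u.length = s) :
    ∃ L : (Fin (b s) → R) →ₗ[R] (Fin (b r) → R), ∀ l, tailVec (u ++ l) r = L (tailVec l s) := by
  induction u generalizing r with
  | nil =>
    obtain rfl : r = s := hs
    exact ⟨.id, fun _ => rfl⟩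
  | cons A u ih =>
    obtain ⟨L, hL⟩ := ih (r := r + 1) (by rw [← hs, List.length_cons]; omega)
    exact ⟨(A r).mulVecLin ∘ₗ L, fun l => congrArg (A r).mulVec (hL l)⟩

lemma exists_word_append_eq (u : List (MatrixFamily b R)) :
    ∃ L : (Fin (b u.length) → R) →ₗ[R] R, ∀ l, word (u ++ l) = L (tailVec l u.length) := by
  obtain ⟨L, hL⟩ := exists_tailVec_append_eq u (zero_add _)
  refine ⟨(∑ i, LinearMap.proj i) ∘ₗ L, fun l => ?_⟩
  simp [word, hL]

lemma word_append_cons_add (u l : List (MatrixFamily b R)) (A B : MatrixFamily b R) :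
    word (u ++ (A + B) :: l) = word (u ++ A :: l) + word (u ++ B :: l) := by
  obtain ⟨L, hL⟩ := exists_word_append_eq u
  simp only [hL, tailVec, Pi.add_apply, Matrix.add_mulVec, map_add]

lemma word_append_cons_smul {K : Type*} [CommRing K] [Algebra K R] (u l : List (MatrixFamily b R))
    (c : K) (A : MatrixFamily b R) :
    word (u ++ (c • A) :: l) = c • word (u ++ A :: l) := by
  obtain ⟨L, hL⟩ := exists_word_append_eq u
  simp only [hL, tailVec, Pi.smul_apply, Matrix.smul_mulVec, LinearMap.map_smul_of_tower]

lemma word_append_cons_cons_eq_zero (u : List (MatrixFamily b R)) {A B : MatrixFamily b R}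
    (h : A u.length * B (u.length + 1) = 0) (l : List (MatrixFamily b R)) :
    word (u ++ A :: B :: l) = 0 := by
  obtain ⟨L, hL⟩ := exists_word_append_eq u
  rw [hL, tailVec_cons_cons, h, Matrix.zero_mulVec, map_zero]

lemma word_append_cons_cons_eq_neg (u : List (MatrixFamily b R)) {A B A' B' : MatrixFamily b R}
    (h : A u.length * B (u.length + 1) + A' u.length * B' (u.length + 1) = 0)
    (l : List (MatrixFamily b R)) :
    word (u ++ A :: B :: l) = -word (u ++ A' :: B' :: l) := by
  obtain ⟨L, hL⟩ := exists_word_append_eq u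
  rw [hL, hL, ← map_neg, tailVec_cons_cons, tailVec_cons_cons, eq_neg_of_add_eq_zero_left h,
    Matrix.neg_mulVec]

lemma word_append_cons_cons_add_add_eq_zero (u : List (MatrixFamily b R))
    {A B A' B' A'' B'' : MatrixFamily b R}
    (h : A u.length * B (u.length + 1) + A' u.length * B' (u.length + 1) +
      A'' u.length * B'' (u.length + 1) = 0) (l : List (MatrixFamily b R)) :
    word (u ++ A :: B :: l) + word (u ++ A' :: B' :: l) + word (u ++ A'' :: B'' :: l) = 0 := by
  obtain ⟨L, hL⟩ := exists_word_append_eq u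
  rw [hL, hL, hL, ← map_add, ← map_add, tailVec_cons_cons, tailVec_cons_cons, tailVec_cons_cons,
    ← Matrix.add_mulVec, ← Matrix.add_mulVec, h, Matrix.zero_mulVec, map_zero]

lemma word_map {S : Type*} [CommRing S] (f : R →+* S) (l : List (MatrixFamily b R)) :
    word (l.map fun A r => (A r).map f) = f (word l) := by
  have tailVec_map (r : ℕ) : tailVec (l.map fun A r => (A r).map f) r = f ∘ tailVec l r := by
    induction l generalizing r with
    | nil => ext; simp [tailVec]
    | cons A l ih =>
      ext i
      simp [tailVec, ih, RingHom.map_mulVec]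
  simp [word, tailVec_map]

end Words

section SwapAntisymmetric

variable {α M : Type*} [AddCommGroup M]

/-- A function on the lists of length `n` that changes sign when two adjacent entries are
swapped. -/
def SwapAntisymmetric (n : ℕ) (F : List α → M) : Prop :=
  ∀ u p q w, u.length + w.length + 2 = n → F (u ++ p :: q :: w) = -F (u ++ q :: p :: w)

namespace SwapAntisymmetric

variable {n : ℕ} {F : List α → M}

lemma append_cons_append (hF : SwapAntisymmetric n F) (u v w : List α) (p : α)
    (hn : u.length + v.length + w.length + 1 = n) :
    F (u ++ v ++ p :: w) = (-1 : ℤ) ^ v.length • F (u ++ p :: (v ++ w)) := by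
  induction v generalizing u with
  | nil => simp
  | cons q v ih =>
    have move_past_tail := ih (u ++ [q]) (by grind)
    have swap_head := hF u q p (v ++ w) (by grind)
    simp only [List.append_assoc, List.cons_append, List.nil_append] at move_past_tail ⊢
    rw [move_past_tail, swap_head, List.length_cons, pow_succ, mul_neg_one, neg_smul, smul_neg]

lemma append_reverse (hF : SwapAntisymmetric n F) (u v : List α) (hn : u.length + v.length = n) :
    F (u ++ v.reverse) = (-1 : ℤ) ^ v.length.choose 2 • F (u ++ v) := by
  induction v generalizing u with
  | nil => simp
  | cons p v ih =>
    have move_head := hF.append_cons_append u v.reverse [] p (by grind)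
    have reverse_tail := ih (u ++ [p]) (by grind)
    simp only [List.append_assoc, List.cons_append, List.nil_append, List.append_nil,
      List.length_reverse] at move_head reverse_tail
    rw [List.reverse_cons, move_head, reverse_tail, smul_smul, ← pow_add,
      List.length_cons, Nat.choose_succ_succ, Nat.choose_one_right]

lemma reverse (hF : SwapAntisymmetric n F) {v : List α} (hn : v.length = n) :
    F v.reverse = (-1 : ℤ) ^ n.choose 2 • F v := by
  simpa [hn] using hF.append_reverse [] v (by simpa using hn)

end SwapAntisymmetric

end SwapAntisymmetric

section Rotations

variable {α M : Type*} [AddCommGroup M] {F : List α → M} {v : α}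

lemma apply_rotate_append_pair {c : List α} (hc : c ≠ [])
    (hends : F (v :: v :: c) + F (c ++ [v, v]) = 0) (hwrap : F (v :: (c ++ [v])) = 0)
    (hmid : ∀ x y, x ≠ [] → y ≠ [] → y ++ x = c → F (x ++ v :: v :: y) = 0)
    {q : ℕ} (hq : q < c.length + 2) :
    F ((c ++ [v, v]).rotate q) =
      (if q = c.length then F (v :: v :: c) else 0) - (if q = 0 then F (v :: v :: c) else 0) := by
  have hpos : 0 < c.length := List.length_pos_iff.mpr hc
  obtain rfl | hq | hq | hq : q = 0 ∨ (0 < q ∧ q < c.length) ∨ q = c.length ∨ q = c.length + 1 := by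
    omega
  · rw [if_neg hpos.ne, if_pos rfl, zero_sub, List.rotate_zero]
    exact eq_neg_of_add_eq_zero_right hends
  · rw [if_neg hq.2.ne, if_neg hq.1.ne', sub_zero,
      List.rotate_eq_drop_append_take (by grind), List.drop_append_of_le_length hq.2.le,
      List.take_append_of_le_length hq.2.le, List.append_assoc]
    exact hmid _ _ (by simpa using hq.2) (by simp [hq.1.ne', hc]) (List.take_append_drop _ _)
  · rw [if_pos hq, if_neg (by omega), sub_zero, hq, List.rotate_append_length_eq]
    rfl
  · rw [if_neg (by omega), if_neg (by omega), sub_zero, hq, ← List.rotate_rotate,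
      List.rotate_append_length_eq]
    simpa using hwrap

lemma mod_add_two_eq_iff_add_two_mod_eq_zero (t n : ℕ) :
    t % (n + 2) = n ↔ (t + 2) % (n + 2) = 0 := by
  have hlt : t % (n + 2) < n + 2 := Nat.mod_lt _ (by omega)
  rw [← Nat.mod_add_mod]
  generalize t % (n + 2) = q at hlt
  obtain hq | rfl | rfl : q < n ∨ q = n ∨ q = n + 1 := by omega
  · rw [Nat.mod_eq_of_lt] <;> omega
  · simp
  · rw [show n + 1 + 2 = 1 + (n + 2) by ring, Nat.add_mod_right, Nat.mod_eq_of_lt] <;> omega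

-- The terms telescope: only the rotations with both copies of `v` at the same end survive.
lemma sum_rotate_append_pair_eq_zero {c : List α} (hc : c ≠ [])
    (hends : F (v :: v :: c) + F (c ++ [v, v]) = 0) (hwrap : F (v :: (c ++ [v])) = 0)
    (hmid : ∀ x y, x ≠ [] → y ≠ [] → y ++ x = c → F (x ++ v :: v :: y) = 0) (s : ℕ) :
    ∑ k ∈ Finset.range (c.length + 2), F ((c ++ [v, v]).rotate (s + 2 * k)) = 0 := by
  let U (k : ℕ) : M := if (s + 2 * k) % (c.length + 2) = 0 then F (v :: v :: c) else 0
  have term_eq (k : ℕ) : F ((c ++ [v, v]).rotate (s + 2 * k)) = U (k + 1) - U k := by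
    rw [← List.rotate_mod, show (c ++ [v, v]).length = c.length + 2 by simp,
      apply_rotate_append_pair hc hends hwrap hmid (Nat.mod_lt _ (by omega))]
    simp only [mod_add_two_eq_iff_add_two_mod_eq_zero, add_assoc, U, mul_add, mul_one]
  rw [Finset.sum_congr rfl fun k _ => term_eq k, Finset.sum_range_sub]
  simp [U]

end Rotations

section DerivFamily

variable {σ K : Type*} [CommRing K] [Fintype σ] {b : ℕ → ℕ}

/-- The family of entrywise directional derivatives `∂_v φ_r`, linearly in the direction `v`. -/
noncomputable def derivFamily (φ : MatrixFamily b (MvPolynomial σ K)) :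
    (σ → K) →ₗ[K] MatrixFamily b (MvPolynomial σ K) where
  toFun v r := (φ r).map (dirDeriv v)
  map_add' v w := by ext; simp
  map_smul' c v := by ext; simp

lemma derivFamily_apply (φ : MatrixFamily b (MvPolynomial σ K)) (v : σ → K) (r : ℕ) :
    derivFamily φ v r = (φ r).map (dirDeriv v) := rfl

/-- The family `φ_r(v)` of matrices of constants. -/
noncomputable def evalFamily (φ : MatrixFamily b (MvPolynomial σ K)) (v : σ → K) :
    MatrixFamily b (MvPolynomial σ K) :=
  fun r => (φ r).map (constEval v)

/-- The bracket `[v_1, …, v_m] = (∂_{v_1} φ_1) ⋯ (∂_{v_m} φ_m)` with directions in place of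
indices. -/
noncomputable def bracket (φ : MatrixFamily b (MvPolynomial σ K)) (l : List (σ → K)) :
    MvPolynomial σ K :=
  word (l.map (derivFamily φ))

/-- The matrices `φ 0, …, φ (m - 1)` form a complex with `φ 0` quadratic and the matrices strictly
between the first and the last linear. -/
structure IsQuadraticLinearComplex (φ : MatrixFamily b (MvPolynomial σ K)) (m : ℕ) : Prop where
  mul_eq_zero : ∀ r, r + 2 ≤ m → φ r * φ (r + 1) = 0
  quadratic : ∀ s t, (φ 0 s t).IsHomogeneous 2
  linear : ∀ r, 1 ≤ r → r + 2 ≤ m → ∀ s t, (φ r s t).IsHomogeneous 1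

namespace IsQuadraticLinearComplex

variable {φ : MatrixFamily b (MvPolynomial σ K)} {m : ℕ}

lemma word_push (hφ : IsQuadraticLinearComplex φ m) {u : List (MatrixFamily b (MvPolynomial σ K))}
    (hu : u.length + 2 ≤ m) (v : σ → K) (w : List (MatrixFamily b (MvPolynomial σ K))) :
    word (u ++ φ :: derivFamily φ v :: w) = -word (u ++ derivFamily φ v :: φ :: w) := by
  apply word_append_cons_cons_eq_neg
  exact mul_map_derivation_add_eq_zero (hφ.mul_eq_zero _ hu) (dirDeriv v)

lemma word_push_list (hφ : IsQuadraticLinearComplex φ m)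
    (u : List (MatrixFamily b (MvPolynomial σ K))) (c : List (σ → K))
    (hu : u.length + c.length + 1 ≤ m) (w : List (MatrixFamily b (MvPolynomial σ K))) :
    word (u ++ φ :: (c.map (derivFamily φ) ++ w)) =
      (-1 : ℤ) ^ c.length • word (u ++ (c.map (derivFamily φ) ++ φ :: w)) := by
  induction c generalizing u with
  | nil => simp
  | cons v c ih =>
    have push_tail := ih (u ++ [derivFamily φ v]) (by grind)
    simp only [List.append_assoc, List.cons_append, List.nil_append, List.map_cons] at push_tail ⊢
    rw [hφ.word_push (by grind), push_tail, List.length_cons, pow_succ, mul_neg_one,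
      neg_smul]

lemma word_append_deriv_deriv_eq_zero (hφ : IsQuadraticLinearComplex φ m)
    {u : List (MatrixFamily b (MvPolynomial σ K))} (hu : u ≠ []) (hm : u.length + 3 ≤ m)
    (v : σ → K) (w : List (MatrixFamily b (MvPolynomial σ K))) :
    word (u ++ derivFamily φ v :: derivFamily φ v :: w) = 0 := by
  have hpos : 0 < u.length := List.length_pos_iff.mpr hu
  apply word_append_cons_cons_eq_zero
  exact map_dirDeriv_mul_map_dirDeriv_eq_zero (hφ.mul_eq_zero _ (by omega))
    (hφ.linear _ hpos (by omega)) (hφ.linear _ (by omega) (by omega)) v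

lemma word_swap (hφ : IsQuadraticLinearComplex φ m)
    {u : List (MatrixFamily b (MvPolynomial σ K))} (hu : u ≠ []) (hm : u.length + 3 ≤ m)
    (v w : σ → K) (l : List (MatrixFamily b (MvPolynomial σ K))) :
    word (u ++ derivFamily φ v :: derivFamily φ w :: l) =
      -word (u ++ derivFamily φ w :: derivFamily φ v :: l) := by
  have add_second (A : MatrixFamily b (MvPolynomial σ K)) :
      word (u ++ A :: derivFamily φ (v + w) :: l) =
        word (u ++ A :: derivFamily φ v :: l) + word (u ++ A :: derivFamily φ w :: l) := by
    simpa using word_append_cons_add (u ++ [A]) l (derivFamily φ v) (derivFamily φ w)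
  have polarized := hφ.word_append_deriv_deriv_eq_zero hu hm (v + w) l
  rw [map_add (derivFamily φ), word_append_cons_add, ← map_add (derivFamily φ), add_second,
    add_second, hφ.word_append_deriv_deriv_eq_zero hu hm,
    hφ.word_append_deriv_deriv_eq_zero hu hm, zero_add, add_zero] at polarized
  exact eq_neg_of_add_eq_zero_left polarized

lemma swapAntisymmetric_word_middle (hφ : IsQuadraticLinearComplex φ m) {k : ℕ} (hk : k + 2 ≤ m)
    (A : MatrixFamily b (MvPolynomial σ K)) (w : List (MatrixFamily b (MvPolynomial σ K))) :
    SwapAntisymmetric k fun l => word (A :: (l.map (derivFamily φ) ++ w)) := by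
  intro u p q v huv
  simpa using hφ.word_swap (u := A :: u.map (derivFamily φ)) (by simp) (by grind) p q
    (v.map (derivFamily φ) ++ w)

lemma swapAntisymmetric_word_cons_cons_self (hφ : IsQuadraticLinearComplex φ m) {k : ℕ}
    (hk : k + 2 ≤ m) (A : MatrixFamily b (MvPolynomial σ K)) :
    SwapAntisymmetric k fun l => word (A :: φ :: l.map (derivFamily φ)) := by
  intro u p q w huw
  have push_to_end (l : List (σ → K)) (hl : l.length = k) :
      word (A :: φ :: l.map (derivFamily φ)) =
        (-1 : ℤ) ^ k • word (A :: (l.map (derivFamily φ) ++ [φ])) := by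
    simpa [hl] using hφ.word_push_list [A] l (by grind) []
  beta_reduce
  rw [push_to_end _ (by grind), push_to_end _ (by grind), ← smul_neg]
  congr 1
  exact hφ.swapAntisymmetric_word_middle hk A [φ] u p q w huw

lemma word_deriv_deriv (hφ : IsQuadraticLinearComplex φ m) (hm : 3 ≤ m) (v : σ → K)
    (l : List (MatrixFamily b (MvPolynomial σ K))) :
    word (derivFamily φ v :: derivFamily φ v :: l) = -word (evalFamily φ v :: φ :: l) := by
  apply word_append_cons_cons_eq_neg []
  exact map_dirDeriv_mul_map_dirDeriv_add_eq_zero (hφ.mul_eq_zero 0 (by omega)) hφ.quadratic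
    (hφ.linear 1 le_rfl hm) v

lemma word_deriv_deriv_add_swap (hφ : IsQuadraticLinearComplex φ m) (hm : 3 ≤ m) (v w : σ → K)
    (l : List (MatrixFamily b (MvPolynomial σ K))) :
    word (derivFamily φ v :: derivFamily φ w :: l) +
        word (derivFamily φ w :: derivFamily φ v :: l) +
      word (derivFamily (derivFamily φ v) w :: φ :: l) = 0 := by
  apply word_append_cons_cons_add_add_eq_zero []
  exact polarized_map_dirDeriv_mul_add_eq_zero (hφ.mul_eq_zero 0 (by omega))
    (hφ.linear 1 le_rfl hm) v w

lemma word_second_deriv (hφ : IsQuadraticLinearComplex φ m) (hm : 3 ≤ m) (v w : σ → K)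
    (l : List (MatrixFamily b (MvPolynomial σ K))) :
    word (derivFamily (derivFamily φ v) w :: derivFamily φ v :: l) =
      -word (evalFamily φ v :: derivFamily φ w :: l) := by
  apply word_append_cons_cons_eq_neg []
  exact map_dirDeriv_dirDeriv_mul_add_eq_zero (hφ.mul_eq_zero 0 (by omega)) hφ.quadratic
    (hφ.linear 1 le_rfl hm) v w

end IsQuadraticLinearComplex

/-- The reversal identity `[v_1, …, v_m] = (-1)^{m(m-1)/2} [v_m, …, v_1]`. -/
def ReversalIdentity (φ : MatrixFamily b (MvPolynomial σ K)) (m : ℕ) : Prop :=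
  ∀ l : List (σ → K), l.length = m →
    bracket φ l = (-1 : ℤ) ^ m.choose 2 • bracket φ l.reverse

lemma neg_one_pow_choose_two_add_two (k : ℕ) :
    (-1 : ℤ) ^ (k + 2).choose 2 = -(-1) ^ k.choose 2 := by
  have choose_eq : (k + 2).choose 2 = 2 * k + 1 + k.choose 2 := by
    rw [Nat.choose_succ_succ' (k + 1), Nat.choose_one_right, Nat.choose_succ_succ' k,
      Nat.choose_one_right]
    ring
  rw [choose_eq, pow_add, pow_succ, pow_mul, neg_one_sq, one_pow, one_mul, neg_one_mul]

namespace IsQuadraticLinearComplex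

variable {φ : MatrixFamily b (MvPolynomial σ K)} {m : ℕ}

lemma bracket_pair_add_bracket_pair_eq_zero (hφ : IsQuadraticLinearComplex φ m)
    (hrev : ReversalIdentity φ m) (v : σ → K) {c : List (σ → K)} (hc : c.length + 2 = m) :
    bracket φ (v :: v :: c) + bracket φ (c ++ [v, v]) = 0 := by
  have move_to_front : bracket φ (c ++ [v, v]) =
      (-1 : ℤ) ^ m.choose 2 • bracket φ (v :: v :: c.reverse) := by
    simpa using hrev (c ++ [v, v]) (by simpa using hc)
  have reverse_rest : bracket φ (v :: v :: c.reverse) =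
      (-1 : ℤ) ^ c.length.choose 2 • bracket φ (v :: v :: c) := by
    obtain rfl | hne := eq_or_ne c []
    · simp
    · have hm : 3 ≤ m := by have := List.length_pos_iff.mpr hne; omega
      simpa [bracket, hφ.word_deriv_deriv hm] using
        (hφ.swapAntisymmetric_word_cons_cons_self hc.le (evalFamily φ v)).reverse (v := c) rfl
  rw [move_to_front, reverse_rest, ← hc, neg_one_pow_choose_two_add_two, smul_smul, neg_mul,
    ← pow_add, Even.neg_one_pow ⟨_, rfl⟩, neg_one_smul, add_neg_cancel]

lemma word_second_deriv_push (hφ : IsQuadraticLinearComplex φ m) (hm : 3 ≤ m) (v e : σ → K)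
    (l : List (MatrixFamily b (MvPolynomial σ K))) :
    word (derivFamily (derivFamily φ v) e :: φ :: derivFamily φ v :: l) =
      word (derivFamily φ v :: derivFamily φ v :: derivFamily φ e :: l) := by
  set D := derivFamily φ
  set P := derivFamily (D v) e
  calc word (P :: φ :: D v :: l)
      = -word (P :: D v :: φ :: l) := hφ.word_push (u := [P]) hm v l
    _ = word (evalFamily φ v :: D e :: φ :: l) := by
        rw [hφ.word_second_deriv hm, neg_neg]
    _ = -word (evalFamily φ v :: φ :: D e :: l) :=
        (neg_eq_iff_eq_neg.mpr (hφ.word_push (u := [evalFamily φ v]) hm e l)).symm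
    _ = word (D v :: D v :: D e :: l) := (hφ.word_deriv_deriv hm v _).symm

lemma bracket_cons_append_self_eq_zero (hφ : IsQuadraticLinearComplex φ m)
    (hrev : ReversalIdentity φ m) (v : σ → K) {c : List (σ → K)} (hne : c ≠ [])
    (hc : c.length + 2 = m) : bracket φ (v :: (c ++ [v])) = 0 := by
  obtain ⟨e, d, rfl⟩ := List.exists_cons_of_ne_nil hne
  have hm : d.length + 3 = m := hc
  set D := derivFamily φ
  set P := derivFamily (D v) e
  have swap_first_two : bracket φ (v :: e :: (d ++ [v])) =
      -(bracket φ (e :: v :: (d ++ [v])) + word (P :: φ :: (d ++ [v]).map D)) := by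
    rw [← add_eq_zero_iff_eq_neg, ← add_assoc]
    exact hφ.word_deriv_deriv_add_swap (by omega) v e ((d ++ [v]).map D)
  have move_v : bracket φ (e :: (d ++ [v, v])) =
      (-1 : ℤ) ^ d.length • bracket φ (e :: v :: (d ++ [v])) := by
    simpa [bracket] using (hφ.swapAntisymmetric_word_middle (k := d.length + 1) (by omega) (D e)
      [D v]).append_cons_append [] d [] v (by simp)
  have move_v_after_P : word (P :: φ :: (d ++ [v]).map D) =
      (-1 : ℤ) ^ d.length • word (P :: φ :: D v :: d.map D) := by
    simpa using (hφ.swapAntisymmetric_word_cons_cons_self (k := d.length + 1) (by omega)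
      P).append_cons_append [] d [] v (by simp)
  have hsign : (-1 : ℤ) ^ d.length * (-1) ^ d.length = 1 := by
    rw [← pow_add, Even.neg_one_pow ⟨_, rfl⟩]
  have move_v_back : bracket φ (e :: v :: (d ++ [v])) =
      (-1 : ℤ) ^ d.length • bracket φ (e :: (d ++ [v, v])) := by
    rw [move_v, smul_smul, hsign, one_smul]
  have exchange : word (P :: φ :: D v :: d.map D) = bracket φ (v :: v :: e :: d) :=
    hφ.word_second_deriv_push (by omega) v e (d.map D)
  rw [List.cons_append, swap_first_two, move_v_back, move_v_after_P, exchange, ← smul_add,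
    add_comm, ← List.cons_append, hφ.bracket_pair_add_bracket_pair_eq_zero hrev v hc, smul_zero,
    neg_zero]

lemma sum_bracket_rotate_eq_zero (hφ : IsQuadraticLinearComplex φ m)
    (hrev : ReversalIdentity φ m) (u w : List (σ → K)) (v : σ → K)
    (hm : u.length + w.length + 2 = m) :
    ∑ k ∈ Finset.range m, bracket φ ((u ++ v :: v :: w).rotate (2 * (k + 1))) = 0 := by
  have hc : (w ++ u).length + 2 = m := by grind
  obtain hnil | hne := eq_or_ne (w ++ u) []
  · obtain ⟨rfl, rfl⟩ := List.append_eq_nil_iff.mp hnil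
    obtain rfl : 2 = m := hm
    simpa [Finset.sum_range_succ, List.rotate_cons_succ] using
      hφ.bracket_pair_add_bracket_pair_eq_zero hrev v (c := []) rfl
  have hmid (x y : List (σ → K)) (hx : x ≠ []) (hy : y ≠ []) (hxy : y ++ x = w ++ u) :
      bracket φ (x ++ v :: v :: y) = 0 := by
    have hpos := List.length_pos_iff.mpr hy
    have hlen : y.length + x.length + 2 = m := by rw [← hc, ← hxy, List.length_append]
    simpa [bracket] using hφ.word_append_deriv_deriv_eq_zero (u := x.map (derivFamily φ))
      (by simpa using hx) (by grind) v (y.map (derivFamily φ))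
  have rotate_eq : u ++ v :: v :: w = (w ++ u ++ [v, v]).rotate w.length := by simp
  rw [← sum_rotate_append_pair_eq_zero hne (hφ.bracket_pair_add_bracket_pair_eq_zero hrev v hc)
    (hφ.bracket_cons_append_self_eq_zero hrev v hne hc) hmid (w.length + 2), hc]
  simp only [rotate_eq, List.rotate_rotate, mul_add, mul_one, add_assoc, add_comm 2]

end IsQuadraticLinearComplex

end DerivFamily

section Alternating

variable {R M N : Type*} [CommRing R] [AddCommGroup M] [Module R M] [AddCommGroup N] [Module R N]

lemma map_add_map_comp_swap_eq_zero {ι : Type*} [DecidableEq ι]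
    (f : MultilinearMap R (fun _ : ι => M) N) {i j : ι} (hij : i ≠ j)
    (hf : ∀ v : ι → M, v i = v j → f v = 0) (v : ι → M) :
    f v + f (v ∘ Equiv.swap i j) = 0 := by
  let F (x y : M) : N := f (Function.update (Function.update v i x) j y)
  have F_self (x : M) : F x x = 0 := hf _ (by simp [hij])
  have F_add_left (x x' y : M) : F (x + x') y = F x y + F x' y := by
    simp only [F, Function.update_comm hij, f.map_update_add]
  have F_add_right (x y y' : M) : F x (y + y') = F x y + F x y' := by
    simp only [F, f.map_update_add]
  have F_eq : F (v i) (v j) = f v := by simp [F]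
  have F_swap : F (v j) (v i) = f (v ∘ Equiv.swap i j) := by
    simp only [F]
    congr 1
    ext k
    rcases eq_or_ne k j with rfl | hkj
    · simp
    rcases eq_or_ne k i with rfl | hki
    · simp [hkj]
    · simp [hkj, hki, Equiv.swap_apply_of_ne_of_ne hki hkj]
  have polarized := F_self (v i + v j)
  rwa [F_add_left, F_add_right, F_add_right, F_self, F_self, zero_add, add_zero, F_eq,
    F_swap] at polarized

lemma map_eq_zero_of_adjacent {n : ℕ} (f : MultilinearMap R (fun _ : Fin n => M) N)
    (hf : ∀ (i : ℕ) (hi : i + 1 < n) (v : Fin n → M), v ⟨i, by omega⟩ = v ⟨i + 1, hi⟩ → f v = 0)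
    (v : Fin n → M) {i j : Fin n} (hv : v i = v j) (hij : i ≠ j) : f v = 0 := by
  wlog hlt : i < j generalizing i j
  · exact this hv.symm hij.symm (lt_of_le_of_ne (not_lt.mp hlt) hij.symm)
  obtain ⟨j, hj⟩ := j
  induction j generalizing v with
  | zero => exact absurd hlt (Nat.not_lt_zero _)
  | succ j ih =>
    obtain hi | hi := eq_or_ne i ⟨j, by omega⟩
    · exact hf j hj v (hi ▸ hv)
    · have hne : (⟨j, by omega⟩ : Fin n) ≠ ⟨j + 1, hj⟩ := by simp
      rw [eq_neg_of_add_eq_zero_left (map_add_map_comp_swap_eq_zero f hne (hf j hj) v), neg_eq_zero]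
      refine ih (v ∘ Equiv.swap _ _) (by omega) ?_ hi
        (lt_of_le_of_ne (Fin.le_def.mpr (Nat.lt_succ_iff.mp hlt)) hi)
      simp [Equiv.swap_apply_of_ne_of_ne hi hij, hv]

lemma exists_eq_succAbove_comp_perm {n : ℕ} {s : Fin n → Fin (n + 1)} (hs : s.Injective) :
    ∃ (k : Fin (n + 1)) (π : Equiv.Perm (Fin n)), s = k.succAbove ∘ π := by
  have not_surjective : ¬ s.Surjective := fun h => by
    simpa using Fintype.card_le_of_surjective s h
  obtain ⟨k, hk⟩ := not_forall.mp not_surjective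
  choose π hπ using fun t => Fin.exists_succAbove_eq (not_exists.mp hk t)
  have hπ_inj : π.Injective := .of_comp (f := k.succAbove) (by simpa [Function.comp_def, hπ])
  exact ⟨k, .ofBijective π (Finite.injective_iff_bijective.mp hπ_inj), funext fun t => (hπ t).symm⟩

lemma alternatingMap_ext_succAbove {n : ℕ} {f g : (Fin (n + 1) → R) [⋀^Fin n]→ₗ[R] N}
    (h : ∀ k : Fin (n + 1), (f fun t => Pi.single (k.succAbove t) 1) =
      g fun t => Pi.single (k.succAbove t) 1) : f = g := by
  refine (Pi.basisFun R (Fin (n + 1))).ext_alternating fun s hs => ?_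
  obtain ⟨k, π, rfl⟩ := exists_eq_succAbove_comp_perm hs
  have map_perm (f : (Fin (n + 1) → R) [⋀^Fin n]→ₗ[R] N) :=
    f.map_perm (fun t => Pi.single (k.succAbove t) 1) π
  simp only [Function.comp_def] at map_perm
  simp only [Pi.basisFun_apply, Function.comp_apply, map_perm, h]

lemma alternatingMap_sum_apply {ι κ : Type*} (s : Finset κ) (f : κ → M [⋀^ι]→ₗ[R] N) (v : ι → M) :
    (∑ k ∈ s, f k) v = ∑ k ∈ s, f k v :=
  map_sum (AddMonoidHom.mk' (fun g : M [⋀^ι]→ₗ[R] N => g v) fun _ _ => rfl) f s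

lemma alternatingMap_eq_sum_det_smul {n : ℕ} (f : (Fin (n + 1) → R) [⋀^Fin n]→ₗ[R] N)
    (v : Fin n → Fin (n + 1) → R) :
    f v = ∑ k : Fin (n + 1), (Matrix.of fun s t => v s (k.succAbove t)).det •
      f fun t => Pi.single (k.succAbove t) 1 := by
  let minor (k : Fin (n + 1)) : (Fin (n + 1) → R) [⋀^Fin n]→ₗ[R] R :=
    Matrix.detRowAlternating.compLinearMap (LinearMap.funLeft R R k.succAbove)
  have minor_single (k l : Fin (n + 1)) :
      (minor k fun t => Pi.single (l.succAbove t) 1) = if k = l then 1 else 0 := by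
    split_ifs with hkl
    · subst hkl
      refine Eq.trans (congrArg Matrix.det ?_) Matrix.det_one
      ext s t
      simp [LinearMap.funLeft_apply, Matrix.one_apply, Pi.single_apply, eq_comm]
    · obtain ⟨t, ht⟩ := Fin.exists_succAbove_eq (Ne.symm hkl)
      refine Matrix.det_eq_zero_of_column_eq_zero t fun s => ?_
      simp [LinearMap.funLeft_apply, ht, Fin.ne_succAbove]
  have expansion : f = ∑ k, (LinearMap.toSpanSingleton R N
      (f fun t => Pi.single (k.succAbove t) 1)).compAlternatingMap (minor k) := by
    refine alternatingMap_ext_succAbove fun l => ?_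
    simp [alternatingMap_sum_apply, minor_single]
  conv_lhs => rw [expansion, alternatingMap_sum_apply]
  rfl

end Alternating

section DoubleBracket

lemma ofFn_update {α : Type*} {n : ℕ} (v : Fin n → α) (i : Fin n) (x : α) :
    List.ofFn (Function.update v i x) =
      (List.ofFn v).take i ++ x :: (List.ofFn v).drop (i + 1) := by
  have ofFn_eq_set : List.ofFn (Function.update v i x) = (List.ofFn v).set i x := by
    refine List.ext_getElem (by simp) fun k hk _ => ?_
    simp [Function.update_apply, List.getElem_set, Fin.ext_iff, eq_comm]
  rw [ofFn_eq_set, List.set_eq_take_append_cons_drop, if_pos (by simp)]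

lemma coe_finRotate_pow {n : ℕ} (t : ℕ) (i : Fin n) :
    ((finRotate n ^ t) i : ℕ) = (i + t) % n := by
  have : NeZero n := i.neZero
  induction t with
  | zero => simp [Nat.mod_eq_of_lt i.isLt]
  | succ t ih =>
    rw [pow_succ', Equiv.Perm.mul_apply, finRotate_apply, Fin.val_add, ih]
    simp [← add_assoc]

lemma ofFn_comp_finRotate_pow {α : Type*} {n : ℕ} (v : Fin n → α) (t : ℕ) :
    List.ofFn (v ∘ (finRotate n ^ t : Equiv.Perm (Fin n))) = (List.ofFn v).rotate t := by
  refine List.ext_getElem (by simp) fun k hk _ => ?_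
  rw [List.getElem_rotate, List.getElem_ofFn, List.getElem_ofFn]
  exact congrArg v (Fin.ext (by simp [coe_finRotate_pow]))

lemma ofFn_comp_rev {α : Type*} {n : ℕ} (v : Fin n → α) :
    List.ofFn (v ∘ Fin.rev) = (List.ofFn v).reverse := by
  refine List.ext_getElem (by simp) fun k hk _ => ?_
  rw [List.getElem_reverse, List.getElem_ofFn, List.getElem_ofFn]
  exact congrArg v (Fin.ext (by simp [Nat.sub_sub, add_comm]))

variable {σ K : Type*} [CommRing K] [Fintype σ] {b : ℕ → ℕ}

/-- The bracket as a multilinear function of `m` directions. -/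
noncomputable def bracketMultilinear (φ : MatrixFamily b (MvPolynomial σ K)) (m : ℕ) :
    MultilinearMap K (fun _ : Fin m => σ → K) (MvPolynomial σ K) where
  toFun v := bracket φ (List.ofFn v)
  map_update_add' v i x y := by
    obtain rfl := Subsingleton.elim ‹DecidableEq (Fin m)› (instDecidableEqFin m)
    simp only [bracket, ofFn_update, List.map_append, List.map_cons, map_add,
      word_append_cons_add]
  map_update_smul' v i c x := by
    obtain rfl := Subsingleton.elim ‹DecidableEq (Fin m)› (instDecidableEqFin m)
    simp only [bracket, ofFn_update, List.map_append, List.map_cons, map_smul,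
      word_append_cons_smul]

/-- The double bracket `[[v_1, …, v_m]]`: the sum of the brackets of the rotations of
`v_1, …, v_m` by even amounts `2, 4, …, 2m`. -/
noncomputable def doubleBracket (φ : MatrixFamily b (MvPolynomial σ K)) (m : ℕ) :
    MultilinearMap K (fun _ : Fin m => σ → K) (MvPolynomial σ K) :=
  ∑ k ∈ Finset.range m, (bracketMultilinear φ m).domDomCongr (finRotate m ^ (2 * (k + 1)))

lemma doubleBracket_apply (φ : MatrixFamily b (MvPolynomial σ K)) (m : ℕ) (v : Fin m → σ → K) :
    doubleBracket φ m v =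
      ∑ k ∈ Finset.range m, bracket φ ((List.ofFn v).rotate (2 * (k + 1))) := by
  simp only [doubleBracket, sum_apply, ← ofFn_comp_finRotate_pow]
  rfl

variable {φ : MatrixFamily b (MvPolynomial σ K)} {m : ℕ}

lemma IsQuadraticLinearComplex.doubleBracket_eq_zero_of_adjacent
    (hφ : IsQuadraticLinearComplex φ m) (hrev : ReversalIdentity φ m) (i : ℕ) (hi : i + 1 < m)
    (v : Fin m → σ → K) (hv : v ⟨i, by omega⟩ = v ⟨i + 1, hi⟩) : doubleBracket φ m v = 0 := by
  have ofFn_eq : List.ofFn v = (List.ofFn v).take i ++ v ⟨i, by omega⟩ :: v ⟨i, by omega⟩ ::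
      (List.ofFn v).drop (i + 2) := by
    conv_lhs => rw [← List.take_append_drop i (List.ofFn v),
      List.drop_eq_getElem_cons (by grind), List.drop_eq_getElem_cons (by grind)]
    simp [hv]
  rw [doubleBracket_apply, ofFn_eq]
  exact hφ.sum_bracket_rotate_eq_zero hrev _ _ _ (by grind)

/-- The double bracket of a complex satisfying the reversal identity, as an alternating map. -/
noncomputable def IsQuadraticLinearComplex.alternatingDoubleBracket
    (hφ : IsQuadraticLinearComplex φ m) (hrev : ReversalIdentity φ m) :
    (σ → K) [⋀^Fin m]→ₗ[K] MvPolynomial σ K where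
  __ := doubleBracket φ m
  map_eq_zero_of_eq' v _ _ hv hij := map_eq_zero_of_adjacent (doubleBracket φ m)
    (hφ.doubleBracket_eq_zero_of_adjacent hrev) v hv hij

lemma IsQuadraticLinearComplex.alternatingDoubleBracket_apply
    (hφ : IsQuadraticLinearComplex φ m) (hrev : ReversalIdentity φ m) (v : Fin m → σ → K) :
    hφ.alternatingDoubleBracket hrev v = doubleBracket φ m v := rfl

lemma reversalIdentity_of_single [DecidableEq σ]
    (h : ∀ a : Fin m → σ, bracketMultilinear φ m (fun i => Pi.single (a i) 1) =
      (-1 : ℤ) ^ m.choose 2 • bracketMultilinear φ m fun i => Pi.single (a i.rev) 1) :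
    ReversalIdentity φ m := by
  have hmult : bracketMultilinear φ m =
      (-1 : ℤ) ^ m.choose 2 • (bracketMultilinear φ m).domDomCongr Fin.revPerm :=
    Module.Basis.ext_multilinear (fun _ => Pi.basisFun K σ) fun a => by
      simpa [Pi.basisFun_apply] using h a
  rintro l rfl
  have hl := congrArg (· l.get) hmult
  have reverse_eq : l.reverse = List.ofFn (l.get ∘ Fin.rev) := by
    rw [ofFn_comp_rev, List.ofFn_get]
  rw [reverse_eq]
  conv_lhs => rw [← List.ofFn_get l]
  exact hl

end DoubleBracket

section CoordinateChange

lemma adjugate_eq_det_smul_inv {n R : Type*} [Fintype n] [DecidableEq n] [CommRing R]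
    {A : Matrix n n R} (hA : IsUnit A.det) : A.adjugate = A.det • A⁻¹ := by
  rw [Matrix.inv_def, smul_smul, Ring.mul_inverse_cancel _ hA, one_smul]

variable {σ K : Type*} [CommRing K] [Fintype σ] {b : ℕ → ℕ}

/-- The substitution `F(x) ↦ F(x')` with `x'_j = ∑ i, g_{ij} x_i`. -/
noncomputable def linSubst (g : Matrix σ σ K) : MvPolynomial σ K →ₐ[K] MvPolynomial σ K :=
  aeval fun j => ∑ i, C (g i j) * X i

lemma dirDeriv_X (v : σ → K) (j : σ) : dirDeriv v (X j : MvPolynomial σ K) = C (v j) := by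
  classical
  simp [dirDeriv_apply, pderiv_X, Pi.single_apply, smul_eq_C_mul]

lemma dirDeriv_linSubst_X (g : Matrix σ σ K) (v : σ → K) (j : σ) :
    dirDeriv v (linSubst g (X j)) = C (Matrix.vecMul v g j) := by
  simp [linSubst, ← smul_eq_C_mul, dirDeriv_X, Matrix.vecMul, dotProduct, smul_eq_mul, mul_comm]

lemma dirDeriv_linSubst (g : Matrix σ σ K) (v : σ → K) (F : MvPolynomial σ K) :
    dirDeriv v (linSubst g F) = linSubst g (dirDeriv (Matrix.vecMul v g) F) := by
  induction F using MvPolynomial.induction_on with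
  | C c => simp [linSubst]
  | add F G hF hG => simp only [map_add, hF, hG]
  | mul_X F j hF =>
    have linSubst_C (c : K) : linSubst g (C c) = C c := (linSubst g).commutes c
    simp only [map_mul, map_add, Derivation.leibniz, smul_eq_mul, hF, dirDeriv_linSubst_X,
      dirDeriv_X, linSubst_C]

lemma bracket_linSubst (φ : MatrixFamily b (MvPolynomial σ K)) (g : Matrix σ σ K)
    (l : List (σ → K)) :
    bracket (fun r => (φ r).map (linSubst g)) l =
      linSubst g (bracket φ (l.map fun v => Matrix.vecMul v g)) := by
  have letter_eq (v : σ → K) : derivFamily (fun r => (φ r).map (linSubst g)) v =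
      fun r => (derivFamily φ (Matrix.vecMul v g) r).map (linSubst g) := by
    ext1 r
    ext1 s t
    exact dirDeriv_linSubst g v (φ r s t)
  rw [bracket, bracket, ← AlgHom.coe_toRingHom, ← word_map, List.map_map, List.map_map]
  exact congrArg word (List.map_congr_left fun v _ => letter_eq v)

lemma doubleBracket_linSubst (φ : MatrixFamily b (MvPolynomial σ K)) (g : Matrix σ σ K) (m : ℕ)
    (v : Fin m → σ → K) :
    doubleBracket (fun r => (φ r).map (linSubst g)) m v =
      linSubst g (doubleBracket φ m fun i => Matrix.vecMul (v i) g) := by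
  simp only [doubleBracket_apply, bracket_linSubst, map_sum, List.map_rotate, List.map_ofFn]
  rfl

end CoordinateChange

section CoordinateBrackets

variable {K : Type*} [Field K] {b : ℕ → ℕ}

lemma brkVec_dotProduct_tailVec {N : ℕ} (φ : MatrixFamily b (MvPolynomial (Fin N) K))
    (a : ℕ → Fin N) (r : ℕ) (l : List (MatrixFamily b (MvPolynomial (Fin N) K))) :
    brkVec φ a r ⬝ᵥ tailVec l r =
      word ((List.range r).map (fun s => derivFamily φ (Pi.single (a s) 1)) ++ l) := by
  induction r generalizing l with
  | zero => simp [brkVec, word, dotProduct]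
  | succ r ih =>
    have brkVec_succ : brkVec φ a (r + 1) =
        Matrix.vecMul (brkVec φ a r) (derivFamily φ (Pi.single (a r) 1) r) := by
      simp only [derivFamily_apply, dirDeriv_single]
      rfl
    rw [brkVec_succ, ← Matrix.dotProduct_mulVec, List.range_succ, List.map_append,
      List.append_assoc]
    exact ih (derivFamily φ (Pi.single (a r) 1) :: l)

lemma brk_eq_bracketMultilinear {N : ℕ} (φ : MatrixFamily b (MvPolynomial (Fin N) K)) (m : ℕ)
    (a : ℕ → Fin N) : brk φ m a = bracketMultilinear φ m fun i => Pi.single (a i) 1 := by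
  have ofFn_eq : List.ofFn (fun i : Fin m => (Pi.single (a i) 1 : Fin N → K)) =
      (List.range m).map fun s => Pi.single (a s) 1 := by
    rw [List.ofFn_eq_map, ← List.map_coe_finRange_eq_range, List.map_map]
    rfl
  have h := brkVec_dotProduct_tailVec φ a m []
  rw [tailVec, dotProduct_one, List.append_nil] at h
  rw [brk, h]
  change _ = word ((List.ofFn _).map _)
  rw [ofFn_eq, List.map_map]
  rfl

lemma dbrk_eq_doubleBracket {N : ℕ} (φ : MatrixFamily b (MvPolynomial (Fin N) K)) (m : ℕ)
    (a : ℕ → Fin N) : dbrk φ m a = doubleBracket φ m fun i => Pi.single (a i) 1 := by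
  simp only [dbrk, doubleBracket, sum_apply, MultilinearMap.domDomCongr_apply,
    brk_eq_bracketMultilinear, coe_finRotate_pow]

lemma ite_mod_four_eq_neg_one_pow_choose_two (m : ℕ) :
    (if m % 4 = 0 ∨ m % 4 = 1 then 1 else -1 : ℤ) = (-1) ^ m.choose 2 := by
  induction m using Nat.twoStepInduction with
  | zero => rfl
  | one => rfl
  | more m ih _ =>
    rw [neg_one_pow_choose_two_add_two, ← ih]
    split_ifs <;> omega

lemma reversalIdentity_of_brk {N m : ℕ} [NeZero N]
    {φ : MatrixFamily b (MvPolynomial (Fin N) K)}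
    (h : ∀ a : ℕ → Fin N, brk φ m a =
      (if m % 4 = 0 ∨ m % 4 = 1 then 1 else -1 : ℤ) • brk φ m fun r => a (m - 1 - r)) :
    ReversalIdentity φ m := by
  refine reversalIdentity_of_single fun a => ?_
  obtain ⟨a, rfl⟩ : ∃ a' : ℕ → Fin N, a = fun i : Fin m => a' i :=
    ⟨Function.extend Fin.val a 0, funext fun i => (Fin.val_injective.extend_apply a 0 i).symm⟩
  simpa [brk_eq_bracketMultilinear, ite_mod_four_eq_neg_one_pow_choose_two, Fin.val_rev,
    Nat.sub_sub, add_comm] using h a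

lemma omitIdx_eq_succAbove {m : ℕ} (j : Fin (m + 1)) (t : Fin m) :
    omitIdx j t = j.succAbove t := by
  simp only [omitIdx, Fin.succAbove, Fin.lt_def, Fin.val_castSucc]
  split_ifs with h h'
  · rfl
  · rfl
  · omega

lemma omegaForm_eq_doubleBracket {m : ℕ} (φ : MatrixFamily b (MvPolynomial (Fin (m + 1)) K))
    (j : Fin (m + 1)) :
    OmegaForm φ m j =
      (-1) ^ ((j : ℕ) + 1) * doubleBracket φ m fun t => Pi.single (j.succAbove t) 1 := by
  simp only [OmegaForm, dbrk_eq_doubleBracket, omitIdx_eq_succAbove]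

end CoordinateBrackets

theorem stmt10_general {K : Type*} [Field K] {m : ℕ} {b : ℕ → ℕ}
    {φ : MatrixFamily b (MvPolynomial (Fin (m + 1)) K)} (hφ : IsQuadraticLinearComplex φ m)
    (hrev : ReversalIdentity φ m) (g : Matrix (Fin (m + 1)) (Fin (m + 1)) K) (j : Fin (m + 1)) :
    OmegaForm (fun r => (φ r).map (linSubst g)) m j =
      ∑ k, C (g.adjugate k j) * linSubst g (OmegaForm φ m k) := by
  have sign_eq (k : ℕ) : (-1 : MvPolynomial (Fin (m + 1)) K) ^ ((j : ℕ) + 1) =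
      (-1) ^ (j + k) * (-1) ^ (k + 1) := by
    rw [← pow_add, show (j : ℕ) + k + (k + 1) = j + 1 + 2 * k by ring,
      pow_add _ (j + 1 : ℕ), pow_mul, neg_one_sq, one_pow, mul_one]
  have minors := alternatingMap_eq_sum_det_smul (hφ.alternatingDoubleBracket hrev)
    fun t => g (j.succAbove t)
  simp only [hφ.alternatingDoubleBracket_apply] at minors
  rw [omegaForm_eq_doubleBracket, doubleBracket_linSubst]
  simp only [Matrix.single_one_vecMul, Matrix.row, minors, map_sum, Finset.mul_sum]
  refine Finset.sum_congr rfl fun k _ => ?_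
  rw [omegaForm_eq_doubleBracket, Matrix.adjugate_fin_succ_eq_det_submatrix, sign_eq k, map_smul,
    smul_eq_C_mul]
  simp only [map_mul, map_pow, map_neg, map_one]
  exact mul_mul_mul_comm ..

/-- covariance of the forms `Ω_j` under a change of coordinates
`x'_j = Σ_i g_{ij} x_i`: if `φ'_r(x) = φ_r(x')` and `Ω'_j` are the forms built from the
`φ'_r`, then `Ω'_j(x) = det(g)·Σ_k (g⁻¹)_{kj}·Ω_k(x')`. -/
theorem stmt10 (K : Type*) [Field K] (n : ℕ) (hn : 4 ≤ n) (m : ℕ) (hm : m = n - 2)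
    (b : ℕ → ℕ) (hbpos : ∀ r, r ≤ m → 0 < b r) (hb0 : b 0 = 1) (hbm : b m = 1)
    (φ : ∀ r : ℕ, Matrix (Fin (b r)) (Fin (b (r + 1))) (MvPolynomial (Fin (n - 1)) K))
    (hcomp : ∀ r, r + 2 ≤ m → φ r * φ (r + 1) = 0)
    (hdeg1 : ∀ p q, (φ 0 p q).IsHomogeneous 2)
    (hdegm : ∀ p q, (φ (m - 1) p q).IsHomogeneous 2)
    (hdegmid : ∀ r, 1 ≤ r → r + 2 ≤ m → ∀ p q, (φ r p q).IsHomogeneous 1)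
    (ε : ℤ) (hε : ε = if m % 4 = 0 ∨ m % 4 = 1 then 1 else -1)
    (hrev : ∀ a : ℕ → Fin (n - 1), brk φ m a = ε • brk φ m (fun r => a (m - 1 - r)))
    (g : Matrix (Fin (n - 1)) (Fin (n - 1)) K) (hg : IsUnit g.det)
    -- the substitution `F(x) ↦ F(x'_1, …, x'_{n−1})` with `x'_j = Σ_i g_{ij} x_i`
    (sub : MvPolynomial (Fin (n - 1)) K →ₐ[K] MvPolynomial (Fin (n - 1)) K)
    (hsub : sub = aeval (fun j : Fin (n - 1) =>
      ∑ i : Fin (n - 1), C (g i j) * X i))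
    (φ' : ∀ r : ℕ, Matrix (Fin (b r)) (Fin (b (r + 1))) (MvPolynomial (Fin (n - 1)) K))
    (hφ' : ∀ r, φ' r = (φ r).map (fun F => sub F)) :
    ∀ j : Fin (n - 1),
      OmegaForm φ' m j
        = C g.det * ∑ k : Fin (n - 1), C (g⁻¹ k j) * sub (OmegaForm φ m k) := by
  subst hsub hε
  obtain rfl : φ' = fun r => (φ r).map (linSubst g) := funext hφ'
  obtain rfl : n = m + 2 := by omega
  intro j
  have covariance := stmt10_general ⟨hcomp, hdeg1, hdegmid⟩
    (reversalIdentity_of_brk (N := m + 1) hrev) g j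
  simp only [adjugate_eq_det_smul_inv hg, Matrix.smul_apply, smul_eq_mul, map_mul, mul_assoc,
    ← Finset.mul_sum] at covariance
  exact covariance
end
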